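/- Entropy bounded below via the nilradius (Corollary 1.2(ii)): For all real P0, r0, δ > 0 there exists a constant C0 > 0, depending only on P0, r0 and δ, such that for every δ-hyperbolic GCB-space (X,σ) which is P0-packed at scale r0 and every non-elementary, discrete group Γ of σ-isometries of X, the nilradius nilrad(Γ,X) is finite and positive, and the entropy of the action satisfies Ent(Γ,X) ≥ C0 · nilrad(Γ,X)^{−1}. -/

import Mathlib

open Metric Filter

/-- Four-points condition for `δ`-hyperbolicity. -/
def IsDeltaHyperbolic (X : Type*) [MetricSpace X] (δ : ℝ) : Prop :=
  ∀ x y z w : X,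
    dist x y + dist z w ≤ max (dist x z + dist y w) (dist x w + dist y z) + 2 * δ

/-- `X` is `P₀`-packed at scale `r₀`: any subset of a closed ball of radius `3r₀` whose
points are pairwise at distance `> 2r₀` has cardinality at most `P₀`. -/
def IsPacked (X : Type*) [MetricSpace X] (P₀ r₀ : ℝ) : Prop :=
  ∀ x : X, ∀ S : Finset X, (↑S ⊆ closedBall x (3 * r₀)) →
    (∀ a ∈ S, ∀ b ∈ S, a ≠ b → 2 * r₀ < dist a b) → (S.card : ℝ) ≤ P₀

/-- A geodesically complete, convex, consistent, reversible geodesic bicombing on `X`.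
Together with completeness of `X` this is the notion of GCB-space. -/
structure IsGCB {X : Type*} [MetricSpace X] (σ : X → X → ℝ → X) : Prop where
  source : ∀ x y : X, σ x y 0 = x
  target : ∀ x y : X, σ x y 1 = y
  geodesic : ∀ x y : X, ∀ t ∈ Set.Icc (0:ℝ) 1, ∀ t' ∈ Set.Icc (0:ℝ) 1,
    dist (σ x y t) (σ x y t') = |t - t'| * dist x y
  convex : ∀ x y x' y' : X,
    ConvexOn ℝ (Set.Icc (0:ℝ) 1) fun t => dist (σ x y t) (σ x' y' t)
  consistent : ∀ x y : X, ∀ s t l : ℝ, 0 ≤ s → s ≤ t → t ≤ 1 → l ∈ Set.Icc (0:ℝ) 1 →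
    σ (σ x y s) (σ x y t) l = σ x y ((1 - l) * s + l * t)
  reversible : ∀ x y : X, ∀ t ∈ Set.Icc (0:ℝ) 1, σ x y t = σ y x (1 - t)
  geodComplete : ∀ x y : X, ∃ γ : ℝ → X, Isometry γ ∧
    (∀ s t : ℝ, s ≤ t → ∀ l ∈ Set.Icc (0:ℝ) 1, σ (γ s) (γ t) l = γ (s + l * (t - s))) ∧
    (∀ t ∈ Set.Icc (0:ℝ) 1, σ x y t = γ (t * dist x y))

/-- `g` is a `σ`-isometry: a surjective isometry preserving the bicombing `σ`. -/
def IsSigmaIsometry {X : Type*} [MetricSpace X] (σ : X → X → ℝ → X) (g : X ≃ᵢ X) : Prop :=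
  ∀ x y : X, ∀ t ∈ Set.Icc (0:ℝ) 1, g (σ x y t) = σ (g x) (g y) t

/-- A group of isometries is discrete if for every `x` and `R` only finitely many of its
elements displace `x` at most `R`. -/
def IsDiscreteSubgroup {X : Type*} [MetricSpace X] (Γ : Subgroup (X ≃ᵢ X)) : Prop :=
  ∀ x : X, ∀ R : ℝ, {g : X ≃ᵢ X | g ∈ Γ ∧ dist x (g x) ≤ R}.Finite

/-- A group is virtually nilpotent if it has a nilpotent subgroup of finite index. -/
def IsVirtuallyNilpotent (G : Type*) [Group G] : Prop :=
  ∃ H : Subgroup G, H.FiniteIndex ∧ Group.IsNilpotent H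

/-- `Γ` is non-elementary: it contains two elements generating a subgroup that is not
virtually nilpotent. -/
def IsNonElementary {X : Type*} [MetricSpace X] (Γ : Subgroup (X ≃ᵢ X)) : Prop :=
  ∃ a b : X ≃ᵢ X, a ∈ Γ ∧ b ∈ Γ ∧
    ¬ IsVirtuallyNilpotent ↥(Subgroup.closure ({a, b} : Set (X ≃ᵢ X)))

/-- An isometry is non-elliptic if its orbits are unbounded. -/
def IsNonElliptic {X : Type*} [MetricSpace X] (g : X ≃ᵢ X) : Prop :=
  ∀ x : X, ¬ Bornology.IsBounded (Set.range fun n : ℤ => (g ^ n) x)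

/-- The `r`-almost stabilizer `Γ_r(x)`, generated by the elements of `Γ` displacing `x`
at most `r`. -/
def almostStabilizer {X : Type*} [MetricSpace X] (Γ : Subgroup (X ≃ᵢ X)) (r : ℝ) (x : X) :
    Subgroup (X ≃ᵢ X) :=
  Subgroup.closure {g : X ≃ᵢ X | g ∈ Γ ∧ dist x (g x) ≤ r}

/-- The nilpotence radius of `Γ` at `x`. -/
noncomputable def nilrad {X : Type*} [MetricSpace X] (Γ : Subgroup (X ≃ᵢ X)) (x : X) : ℝ :=
  sSup {r : ℝ | 0 ≤ r ∧ IsVirtuallyNilpotent ↥(almostStabilizer Γ r x)}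

/-- The Margulis domain `M_ε(g)`. -/
def margulisDomain {X : Type*} [MetricSpace X] (g : X ≃ᵢ X) (ε : ℝ) : Set X :=
  {x : X | dist x (g x) ≤ ε}

/-- The generalized Margulis domain `ℳ_ε(g) = ⋃_{i ≠ 0} M_ε(gⁱ)`. -/
def genMargulisDomain {X : Type*} [MetricSpace X] (g : X ≃ᵢ X) (ε : ℝ) : Set X :=
  ⋃ i ∈ {i : ℤ | i ≠ 0}, margulisDomain (g ^ i) ε

/-- `f` parameterizes a geodesic segment from `x` to `y` on `[0, dist x y]`. -/
def IsGeodesicFrom {X : Type*} [MetricSpace X] (f : ℝ → X) (x y : X) : Prop :=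
  f 0 = x ∧ f (dist x y) = y ∧
    ∀ s ∈ Set.Icc 0 (dist x y), ∀ t ∈ Set.Icc 0 (dist x y), dist (f s) (f t) = |s - t|

/-- `X` is a geodesic space. -/
def IsGeodesicSpace (X : Type*) [MetricSpace X] : Prop :=
  ∀ x y : X, ∃ f : ℝ → X, IsGeodesicFrom f x y

/-- `C` is `lam`-quasiconvex: any two of its points are joined by a geodesic contained in
the closed `lam`-neighbourhood of `C`. -/
def IsQuasiconvex {X : Type*} [MetricSpace X] (lam : ℝ) (C : Set X) : Prop :=
  ∀ x ∈ C, ∀ y ∈ C, ∃ f : ℝ → X, IsGeodesicFrom f x y ∧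
    ∀ t ∈ Set.Icc 0 (dist x y), infDist (f t) C ≤ lam

/-- `C` is a convex subset: any two of its points are joined by a geodesic inside `C`. -/
def IsConvexSubset {X : Type*} [MetricSpace X] (C : Set X) : Prop :=
  ∀ x ∈ C, ∀ y ∈ C, ∃ f : ℝ → X, IsGeodesicFrom f x y ∧
    ∀ t ∈ Set.Icc 0 (dist x y), f t ∈ C

/-- Arc-length concatenation of three paths, of respective lengths `d₁`, `d₂` and the rest. -/
noncomputable def concatPath {X : Type*} (d₁ d₂ : ℝ) (f₁ f₂ f₃ : ℝ → X) : ℝ → X :=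
  fun t => if t ≤ d₁ then f₁ t else if t ≤ d₁ + d₂ then f₂ (t - d₁) else f₃ (t - d₁ - d₂)

/-!
Let `R` be slightly larger than the nilradius, let `x₀` be a point where `Γ_R(x₀)` is not virtually
nilpotent, and let `S` be the finite set of elements of `Γ` displacing `x₀` by at most `R`. By a
uniform Tits alternative, two elements of `S ^ N`, with `N` depending only on `P₀`, `r₀` and `δ`,
play ping-pong and so generate a free semigroup. Its words of length `n` displace `x₀` by at most
`n * N * R`, so the entropy is at least `log 2 / (N * R)`. As packing also bounds the entropy from
above, this forces the nilradius to be positive.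

The alternative compares the displacements of `S ^ (M + 1)` with `δ`. If they are small at a common
point, a Margulis lemma applies: on packed spaces with a convex bicombing, isometries with small
displacement on a ball satisfy `ℓ ⁅g, h⁆ ≤ C * ℓ g * ℓ h` for a suitable length `ℓ`, so they
generate a virtually nilpotent group, and a pigeonhole argument extends this to `S`. If they are
large at every point, a short product `g` of elements of `S` is hyperbolic with long translation
length, and it plays ping-pong with one of its conjugates by `S`, unless all of `S` preserves the
axis of a power of `g`, in which case `S` generates a virtually cyclic group.
-/

theorem exists_maximal_separated_of_card_le {α : Type*} {d : α → α → ℝ} {s : ℝ} {A : Set α} {K : ℕ}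
    (hself : ∀ a, d a a ≤ s) (hcomm : ∀ a b, d a b = d b a)
    (hK : ∀ S : Finset α, ↑S ⊆ A → (S : Set α).Pairwise (s < d · ·) → S.card ≤ K) :
    ∃ N : Finset α, ↑N ⊆ A ∧ (N : Set α).Pairwise (s < d · ·) ∧ ∀ a ∈ A, ∃ n ∈ N, d a n ≤ s := by
  classical
  let cards : Set ℕ :=
    {k | ∃ S : Finset α, ↑S ⊆ A ∧ (S : Set α).Pairwise (s < d · ·) ∧ S.card = k}
  have hbdd : BddAbove cards := ⟨K, by rintro k ⟨S, hSA, hS, rfl⟩; exact hK S hSA hS⟩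
  obtain ⟨N, hNA, hN, hmax⟩ := Nat.sSup_mem (s := cards) ⟨0, ∅, by simp⟩ hbdd
  refine ⟨N, hNA, hN, fun a ha => ?_⟩
  by_contra! hfar
  have haN : a ∉ N := fun h => (hfar a h).not_ge (hself a)
  have hcard : (insert a N).card ∈ cards := by
    refine ⟨insert a N, ?_, ?_, rfl⟩
    · rw [Finset.coe_insert]
      exact Set.insert_subset ha hNA
    · rw [Finset.coe_insert]
      exact hN.insert fun n hn _ => ⟨hfar n hn, by rw [hcomm]; exact hfar n hn⟩
  have := le_csSup hbdd hcard
  rw [Finset.card_insert_of_notMem haN, hmax] at this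
  omega

section VirtuallyNilpotent

variable {G : Type*} [Group G]

theorem isVirtuallyNilpotent_of_relIndex_ne_zero {H A : Subgroup G} {n : ℕ}
    (hH : H.lowerCentralSeries n = ⊥) (h : H.relIndex A ≠ 0) : IsVirtuallyNilpotent A := by
  refine ⟨H.subgroupOf A, ⟨h⟩, (Subgroup.isNilpotent_iff_lowerCentralSeries _).2 ⟨n, ?_⟩⟩
  apply Subgroup.map_injective A.subtype_injective
  rw [Subgroup.map_lowerCentralSeries, Subgroup.map_bot, eq_bot_iff, ← hH,
    Subgroup.subgroupOf_map_subtype]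
  exact Subgroup.lowerCentralSeries_mono n inf_le_left

namespace IsVirtuallyNilpotent

theorem exists_lowerCentralSeries_eq_bot {A : Subgroup G} (hA : IsVirtuallyNilpotent A) :
    ∃ (H : Subgroup G) (n : ℕ), H.lowerCentralSeries n = ⊥ ∧ H.relIndex A ≠ 0 := by
  obtain ⟨H, hfinite, hnil⟩ := hA
  obtain ⟨n, hn⟩ := (Subgroup.isNilpotent_iff_lowerCentralSeries _).1 hnil
  refine ⟨H.map A.subtype, n, ?_, ?_⟩
  · rw [← Subgroup.map_lowerCentralSeries, hn, Subgroup.map_bot]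
  · rw [Subgroup.relIndex, Subgroup.subgroupOf,
      Subgroup.comap_map_eq_self_of_injective A.subtype_injective]
    exact hfinite.index_ne_zero

theorem of_relIndex_ne_zero {A B : Subgroup G} (hA : IsVirtuallyNilpotent A)
    (h : A.relIndex B ≠ 0) : IsVirtuallyNilpotent B := by
  obtain ⟨H, n, hn, hHA⟩ := hA.exists_lowerCentralSeries_eq_bot
  exact isVirtuallyNilpotent_of_relIndex_ne_zero hn (Subgroup.relIndex_ne_zero_trans hHA h)

theorem of_le {A B : Subgroup G} (hA : IsVirtuallyNilpotent A) (h : B ≤ A) :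
    IsVirtuallyNilpotent B :=
  hA.of_relIndex_ne_zero (by rw [Subgroup.relIndex_eq_one.2 h]; exact one_ne_zero)

theorem map_subtype {Γ : Subgroup G} {A : Subgroup Γ} (hA : IsVirtuallyNilpotent A) :
    IsVirtuallyNilpotent (A.map Γ.subtype) := by
  obtain ⟨H, n, hn, hHA⟩ := hA.exists_lowerCentralSeries_eq_bot
  refine isVirtuallyNilpotent_of_relIndex_ne_zero (H := H.map Γ.subtype) (n := n) ?_ ?_
  · rw [← Subgroup.map_lowerCentralSeries, hn, Subgroup.map_bot]
  · rwa [Subgroup.relIndex_map_map_of_injective _ _ Γ.subtype_injective]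

end IsVirtuallyNilpotent

theorem relIndex_ne_zero_of_finite_cover {A B : Subgroup G} {F : Set G} (hF : F.Finite)
    (h : ∀ w ∈ B, ∃ f ∈ F, f⁻¹ * w ∈ A) : A.relIndex B ≠ 0 := by
  rw [Subgroup.relIndex, Subgroup.index_ne_zero_iff_finite]
  choose f hf hfA using fun q : B ⧸ A.subgroupOf B => h q.out q.out.2
  have := hF.to_subtype
  refine Finite.of_injective (fun q => (⟨f q, hf q⟩ : F)) fun q q' hq => ?_
  have hq : f q = f q' := congrArg Subtype.val hq
  rw [← q.out_eq', ← q'.out_eq', QuotientGroup.eq, Subgroup.mem_subgroupOf]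
  have := A.mul_mem (A.inv_mem (hfA q)) (hfA q')
  rw [hq] at this
  simpa [mul_assoc] using this

theorem isVirtuallyNilpotent_of_lowerCentralSeries_le_of_finite {H E : Subgroup G} [Finite E]
    {n : ℕ} (hHE : H ≤ Subgroup.normalizer (E : Set G)) (hn : H.lowerCentralSeries n ≤ E) :
    IsVirtuallyNilpotent H := by
  have hcent : (Subgroup.centralizer (E : Set G)).relIndex
      (Subgroup.normalizer (E : Set G)) ≠ 0 := by
    rw [Subgroup.relIndex, ← Subgroup.normalizerMonoidHom_ker]
    have : Finite (MulAut E) := .of_injective (fun e : MulAut E => (e : E → E))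
      DFunLike.coe_injective
    exact Subgroup.FiniteIndex.index_ne_zero
  refine isVirtuallyNilpotent_of_relIndex_ne_zero
    (H := H ⊓ Subgroup.centralizer (E : Set G)) (n := n + 1) ?_ ?_
  · rw [Subgroup.lowerCentralSeries_succ, Subgroup.commutator_comm,
      Subgroup.commutator_eq_bot_iff_le_centralizer]
    exact inf_le_right.trans
      (Subgroup.centralizer_le ((Subgroup.lowerCentralSeries_mono n inf_le_left).trans hn))
  · rw [inf_comm, Subgroup.inf_relIndex_right]
    exact fun h => hcent (Subgroup.relIndex_eq_zero_of_le_right hHE h)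

open scoped commutatorElement

theorem commutatorElement_mem_of_mem_closure {S : Set G} {K : Subgroup G} {t x : G}
    (hK : Subgroup.closure S ≤ Subgroup.normalizer (K : Set G)) (h : ∀ s ∈ S, ⁅s, t⁆ ∈ K)
    (hx : x ∈ Subgroup.closure S) : ⁅x, t⁆ ∈ K := by
  have hconj := Subgroup.le_normalizer_iff.1 hK
  induction hx using Subgroup.closure_induction with
  | mem s hs => exact h s hs
  | one => simp
  | mul a b ha _ iha ihb =>
    rw [commutatorElement_mul_left_eq_conj_mul]
    exact mul_mem (hconj a ha _ ihb) iha
  | inv a ha iha =>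
    have := hconj a⁻¹ (inv_mem ha) _ (inv_mem iha)
    rwa [commutatorElement_inv, inv_inv, ← commutatorElement_inv_left] at this

theorem commutator_closure_le {S T : Set G} {K : Subgroup G}
    (hS : Subgroup.closure S ≤ Subgroup.normalizer (K : Set G))
    (hT : Subgroup.closure T ≤ Subgroup.normalizer (K : Set G))
    (h : ∀ s ∈ S, ∀ t ∈ T, ⁅s, t⁆ ∈ K) : ⁅Subgroup.closure S, Subgroup.closure T⁆ ≤ K := by
  refine Subgroup.commutator_le.2 fun x hx y hy => ?_
  rw [← commutatorElement_inv]
  refine inv_mem (commutatorElement_mem_of_mem_closure hT (fun t ht => ?_) hy)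
  rw [← commutatorElement_inv]
  exact inv_mem (commutatorElement_mem_of_mem_closure hS (fun s hs => h s hs t ht) hx)

theorem closure_le_normalizer_closure {S T : Set G} (hS : ∀ s ∈ S, s⁻¹ ∈ S)
    (h : ∀ s ∈ S, ∀ t ∈ T, s * t * s⁻¹ ∈ Subgroup.closure T) :
    Subgroup.closure S ≤ Subgroup.normalizer (Subgroup.closure T : Set G) := by
  have hconj : ∀ s ∈ S, ∀ k ∈ Subgroup.closure T, s * k * s⁻¹ ∈ Subgroup.closure T := by
    intro s hs
    have : Subgroup.closure T ≤ (Subgroup.closure T).comap (MulAut.conj s).toMonoidHom :=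
      (Subgroup.closure_le _).2 (h s hs)
    exact this
  refine (Subgroup.closure_le _).2 fun s hs => Subgroup.mem_normalizer_iff.2 fun k =>
    ⟨hconj s hs k, fun hk => ?_⟩
  simpa [mul_assoc] using hconj s⁻¹ (hS s hs) _ hk

section DescendingSets

variable {V : ℕ → Set G}

theorem closure_zero_le_normalizer_closure (hinv : ∀ v ∈ V 0, v⁻¹ ∈ V 0) (hV : Antitone V)
    (hcomm : ∀ j, ∀ v ∈ V 0, ∀ w ∈ V j, ⁅v, w⁆ ∈ V (j + 1)) (j : ℕ) :
    Subgroup.closure (V 0) ≤ Subgroup.normalizer (Subgroup.closure (V j) : Set G) := by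
  refine closure_le_normalizer_closure hinv fun v hv w hw => ?_
  rw [← MulAut.conj_apply, conj_eq_commutatorElement_mul]
  exact mul_mem (Subgroup.subset_closure (hV j.le_succ (hcomm j v hv w hw)))
    (Subgroup.subset_closure hw)

theorem lowerCentralSeries_closure_zero_le (hinv : ∀ v ∈ V 0, v⁻¹ ∈ V 0) (hV : Antitone V)
    (hcomm : ∀ j, ∀ v ∈ V 0, ∀ w ∈ V j, ⁅v, w⁆ ∈ V (j + 1)) (j : ℕ) :
    (Subgroup.closure (V 0)).lowerCentralSeries j ≤ Subgroup.closure (V j) := by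
  have hnorm := closure_zero_le_normalizer_closure hinv hV hcomm
  induction j with
  | zero => exact le_rfl
  | succ j ih =>
    rw [Subgroup.lowerCentralSeries_succ, Subgroup.commutator_comm]
    refine (Subgroup.commutator_mono le_rfl ih).trans (commutator_closure_le (hnorm _)
      ((Subgroup.closure_mono (hV j.zero_le)).trans (hnorm _)) fun s hs t ht => ?_)
    exact Subgroup.subset_closure (hcomm j s hs t ht)

end DescendingSets

end VirtuallyNilpotent

/-- A proper length function on a group. -/
structure IsProperLength {G : Type*} [Group G] (N : G → ℝ) : Prop where
  one : N 1 = 0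
  inv : ∀ g, N g⁻¹ = N g
  mul_le : ∀ g h, N (g * h) ≤ N g + N h
  finite_setOf_le : ∀ R, {g | N g ≤ R}.Finite

/-- The tent of height `1` and radius `ρ` over a length function `N`. -/
noncomputable def tent {G : Type*} (N : G → ℝ) (ρ : ℝ) (g : G) : ℝ := max 0 (1 - N g / ρ)

/-- The convolution of `tent N ρ` with itself; the sum is finite when `N` is proper. -/
noncomputable def tentConv {G : Type*} [Group G] (N : G → ℝ) (ρ : ℝ) (x : G) : ℝ :=
  ∑ᶠ k, tent N ρ k * tent N ρ (k⁻¹ * x)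

section Tent

variable {G : Type*} {N : G → ℝ} {ρ : ℝ} {g : G}

theorem tent_eq_zero (hρ : 0 < ρ) (h : ρ ≤ N g) : tent N ρ g = 0 :=
  max_eq_left (sub_nonpos.2 ((one_le_div hρ).2 h))

theorem half_le_tent (hρ : 0 < ρ) (h : N g ≤ ρ / 2) : 1 / 2 ≤ tent N ρ g := by
  have : N g / ρ ≤ 1 / 2 := by rw [div_le_iff₀ hρ]; linarith
  exact le_max_of_le_right (by linarith)

theorem abs_finsum_le_ncard_mul {α : Type*} {f : α → ℝ} {s : Set α} {b : ℝ} (hs : s.Finite)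
    (hsupp : f.support ⊆ s) (hf : ∀ k ∈ s, |f k| ≤ b) : |∑ᶠ k, f k| ≤ s.ncard * b := by
  rw [finsum_eq_sum_of_support_subset f (s := hs.toFinset) (by simpa using hsupp),
    Set.ncard_eq_toFinset_card s hs, ← nsmul_eq_mul]
  refine (Finset.abs_sum_le_sum_abs _ _).trans (Finset.sum_le_card_nsmul _ _ _ fun k hk => ?_)
  exact hf k (hs.mem_toFinset.1 hk)

theorem abs_pow_sub_one_le {G : Type*} [Monoid G] {f : G → ℝ} {c : G} {E : ℝ}
    (h : ∀ x, |f (c * x) - f x| ≤ E) (n : ℕ) : |f (c ^ n) - f 1| ≤ n * E := by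
  induction n with
  | zero => simp
  | succ n ih =>
    have hstep := h (c ^ n)
    rw [← pow_succ'] at hstep
    calc |f (c ^ (n + 1)) - f 1| ≤ |f (c ^ (n + 1)) - f (c ^ n)| + |f (c ^ n) - f 1| :=
          abs_sub_le _ _ _
      _ ≤ (n + 1 : ℕ) * E := by push_cast; linarith

end Tent

namespace IsProperLength

open scoped commutatorElement Topology

variable {G : Type*} [Group G] {N : G → ℝ} {ρ : ℝ} {g h : G}

theorem nonneg (hN : IsProperLength N) (g : G) : 0 ≤ N g := by
  have := hN.mul_le g g⁻¹
  rw [mul_inv_cancel, hN.one, hN.inv] at this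
  linarith

theorem abs_sub_le (hN : IsProperLength N) (g a : G) : |N (g * a) - N a| ≤ N g := by
  have hinv := hN.mul_le g⁻¹ (g * a)
  rw [inv_mul_cancel_left, hN.inv] at hinv
  exact abs_sub_le_iff.2 ⟨by linarith [hN.mul_le g a], by linarith⟩

theorem abs_tent_sub_le (hN : IsProperLength N) (hρ : 0 < ρ) (g a : G) :
    |tent N ρ (g * a) - tent N ρ a| ≤ N g / ρ := by
  rw [tent, tent, max_comm 0, max_comm 0]
  refine (abs_max_sub_max_le_abs _ _ _).trans ?_
  rw [abs_sub_comm, show 1 - N a / ρ - (1 - N (g * a) / ρ) = (N (g * a) - N a) / ρ by ring,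
    abs_div, abs_of_pos hρ]
  exact div_le_div_of_nonneg_right (hN.abs_sub_le g a) hρ.le

theorem tent_inv (hN : IsProperLength N) (ρ : ℝ) (g : G) : tent N ρ g⁻¹ = tent N ρ g := by
  rw [tent, tent, hN.inv]

theorem finite_support_tent (hN : IsProperLength N) (hρ : 0 < ρ) : (tent N ρ).support.Finite :=
  (hN.finite_setOf_le ρ).subset fun g hg => by
    by_contra h
    exact hg (tent_eq_zero hρ (not_le.1 h).le)

theorem tentConv_eq_zero (hN : IsProperLength N) (hρ : 0 < ρ) (h : 2 * ρ ≤ N g) :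
    tentConv N ρ g = 0 := by
  refine (finsum_congr fun k => ?_).trans finsum_zero
  rcases le_or_gt ρ (N k) with hk | hk
  · rw [tent_eq_zero hρ hk, zero_mul]
  · have hsub := hN.mul_le k (k⁻¹ * g)
    rw [mul_inv_cancel_left] at hsub
    rw [tent_eq_zero hρ (g := k⁻¹ * g) (by linarith), mul_zero]

theorem ncard_div_four_le_tentConv_one (hN : IsProperLength N) (hρ : 0 < ρ) :
    ({k | N k ≤ ρ / 2}.ncard : ℝ) / 4 ≤ tentConv N ρ 1 := by
  have hhalf := hN.finite_setOf_le (ρ / 2)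
  have hball := hN.finite_setOf_le ρ
  calc ({k | N k ≤ ρ / 2}.ncard : ℝ) / 4 = ∑ _k ∈ hhalf.toFinset, (1 / 4 : ℝ) := by
        rw [Finset.sum_const, nsmul_eq_mul, Set.ncard_eq_toFinset_card _ hhalf]; ring
    _ ≤ ∑ k ∈ hhalf.toFinset, tent N ρ k ^ 2 := by
        refine Finset.sum_le_sum fun k hk => ?_
        have := half_le_tent hρ (hhalf.mem_toFinset.1 hk)
        nlinarith
    _ ≤ ∑ k ∈ hball.toFinset, tent N ρ k ^ 2 := by
        refine Finset.sum_le_sum_of_subset_of_nonneg ?_ fun _ _ _ => sq_nonneg _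
        exact Set.Finite.toFinset_mono fun k (hk : N k ≤ ρ / 2) => hk.trans (by linarith)
    _ = ∑ᶠ k, tent N ρ k ^ 2 := by
        refine (finsum_eq_sum_of_support_subset _ fun k hk => ?_).symm
        rw [hball.coe_toFinset]
        by_contra hfar
        exact hk (by simp only [tent_eq_zero hρ (not_le.1 hfar).le, ne_eq, OfNat.ofNat_ne_zero,
          not_false_eq_true, zero_pow])
    _ = tentConv N ρ 1 := finsum_congr fun k => by rw [mul_one, hN.tent_inv, sq]

theorem tentConv_second_difference (hN : IsProperLength N) (hρ : 0 < ρ) (g h z : G) :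
    tentConv N ρ (g * (h * z)) - tentConv N ρ (g * z) - tentConv N ρ (h * z) + tentConv N ρ z =
      ∑ᶠ k, (tent N ρ (g * k) - tent N ρ k) *
        (tent N ρ (k⁻¹ * (h * z)) - tent N ρ (k⁻¹ * z)) := by
  have hs := hN.finite_support_tent hρ
  have hs' : (Function.support fun k => tent N ρ (g * k)).Finite :=
    hs.preimage (mul_right_injective g).injOn
  have htranslate (w : G) :
      tentConv N ρ (g * w) = ∑ᶠ k, tent N ρ (g * k) * tent N ρ (k⁻¹ * w) := by
    rw [tentConv, ← finsum_comp_equiv (Equiv.mulLeft g)]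
    exact finsum_congr fun k => by simp [mul_assoc]
  have hfin (w : G) : (Function.support fun k => tent N ρ k * tent N ρ (k⁻¹ * w)).Finite :=
    hs.subset (Function.support_mul_subset_left _ _)
  have hfin' (w : G) :
      (Function.support fun k => tent N ρ (g * k) * tent N ρ (k⁻¹ * w)).Finite :=
    hs'.subset (Function.support_mul_subset_left _ _)
  rw [htranslate, htranslate, tentConv, tentConv, ← finsum_sub_distrib (hfin' _) (hfin' _),
    sub_add, ← finsum_sub_distrib (hfin _) (hfin _), ← finsum_sub_distrib
      (((hfin' _).union (hfin' _)).subset (Function.support_sub _ _))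
      (((hfin _).union (hfin _)).subset (Function.support_sub _ _))]
  exact finsum_congr fun k => by ring

theorem abs_tentConv_second_difference_le (hN : IsProperLength N) (hρ : 0 < ρ) {C : ℝ}
    (hg : N g ≤ ρ) (hC : ∀ k, N k ≤ 2 * ρ → N (k⁻¹ * h * k) ≤ C * N h) (z : G) :
    |tentConv N ρ (g * (h * z)) - tentConv N ρ (g * z) - tentConv N ρ (h * z) + tentConv N ρ z| ≤
      {k | N k ≤ 2 * ρ}.ncard * (C * (N g * N h) / ρ ^ 2) := by
  rw [hN.tentConv_second_difference hρ]
  refine abs_finsum_le_ncard_mul (hN.finite_setOf_le _) (fun k hk => ?_) fun k hk => ?_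
  · by_contra hfar
    have hfar : 2 * ρ < N k := not_le.1 hfar
    have hsub := abs_le.1 (hN.abs_sub_le g k)
    refine hk ?_
    simp only [tent_eq_zero hρ (g := k) (by linarith),
      tent_eq_zero hρ (g := g * k) (by linarith), sub_zero, zero_mul]
  · have hdiff := hN.abs_tent_sub_le hρ (k⁻¹ * h * k) (k⁻¹ * z)
    rw [show k⁻¹ * h * k * (k⁻¹ * z) = k⁻¹ * (h * z) by group] at hdiff
    have hg₀ := hN.nonneg g
    calc |_| ≤ N g / ρ * (C * N h / ρ) := by
          rw [abs_mul]
          refine mul_le_mul (hN.abs_tent_sub_le hρ g k) (hdiff.trans ?_) (abs_nonneg _)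
            (by positivity)
          have := hC k hk
          gcongr
      _ = C * (N g * N h) / ρ ^ 2 := by ring

/- Both `g * h * z` and `h * g * z` are obtained from `z` by two small translations, so the two
second differences of `tentConv` bound its variation under left multiplication by `⁅g, h⁆`. -/
theorem abs_tentConv_commutator_mul_sub_le (hN : IsProperLength N) (hρ : 0 < ρ) {C : ℝ}
    (hg : N g ≤ ρ) (hh : N h ≤ ρ) (hCg : ∀ k, N k ≤ 2 * ρ → N (k⁻¹ * g * k) ≤ C * N g)
    (hCh : ∀ k, N k ≤ 2 * ρ → N (k⁻¹ * h * k) ≤ C * N h) (x : G) :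
    |tentConv N ρ (⁅g, h⁆ * x) - tentConv N ρ x| ≤
      2 * ({k | N k ≤ 2 * ρ}.ncard * (C * (N g * N h) / ρ ^ 2)) := by
  have hgh := hN.abs_tentConv_second_difference_le hρ hg hCh (g⁻¹ * h⁻¹ * x)
  have hhg := hN.abs_tentConv_second_difference_le hρ hh hCg (g⁻¹ * h⁻¹ * x)
  rw [show g * (h * (g⁻¹ * h⁻¹ * x)) = ⁅g, h⁆ * x by simp only [commutatorElement_def, mul_assoc]]
    at hgh
  rw [show h * (g * (g⁻¹ * h⁻¹ * x)) = x by group, mul_comm (N h)] at hhg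
  rw [abs_le] at hgh hhg ⊢
  constructor <;> linarith [hgh.1, hgh.2, hhg.1, hhg.2]

/- `tentConv N ρ` is large at `1` and vanishes at length `2 * ρ`, so the powers of `⁅g, h⁆` cannot
get that far too quickly. -/
theorem ncard_mul_sq_le_of_lt_commutator_pow (hN : IsProperLength N) (hρ : 0 < ρ) {C : ℝ}
    (hg : N g ≤ ρ) (hh : N h ≤ ρ) (hCg : ∀ k, N k ≤ 2 * ρ → N (k⁻¹ * g * k) ≤ C * N g)
    (hCh : ∀ k, N k ≤ 2 * ρ → N (k⁻¹ * h * k) ≤ C * N h) {n : ℕ} (hn : 2 * ρ ≤ N (⁅g, h⁆ ^ n)) :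
    {k | N k ≤ ρ / 2}.ncard * ρ ^ 2 ≤
      8 * n * {k | N k ≤ 2 * ρ}.ncard * (C * (N g * N h)) := by
  have hpow := abs_pow_sub_one_le
    (hN.abs_tentConv_commutator_mul_sub_le hρ hg hh hCg hCh) n
  rw [hN.tentConv_eq_zero hρ hn, zero_sub, abs_neg] at hpow
  have := (hN.ncard_div_four_le_tentConv_one hρ).trans ((le_abs_self _).trans hpow)
  calc ({k | N k ≤ ρ / 2}.ncard : ℝ) * ρ ^ 2
        = {k | N k ≤ ρ / 2}.ncard / 4 * (4 * ρ ^ 2) := by ring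
    _ ≤ n * (2 * ({k | N k ≤ 2 * ρ}.ncard * (C * (N g * N h) / ρ ^ 2))) * (4 * ρ ^ 2) := by
        gcongr
    _ = 8 * n * {k | N k ≤ 2 * ρ}.ncard * (C * (N g * N h)) := by field_simp; ring

theorem ncard_le_mul_ncard_of_card_le (hN : IsProperLength N) {R s : ℝ} (hs : 0 ≤ s) {K : ℕ}
    (hK : ∀ T : Finset G, (∀ t ∈ T, N t ≤ R) →
      (T : Set G).Pairwise (fun t t' => s < N (t⁻¹ * t')) → T.card ≤ K) :
    {k | N k ≤ R}.ncard ≤ K * {k | N k ≤ s}.ncard := by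
  classical
  obtain ⟨T, hTR, hTsep, hcover⟩ := exists_maximal_separated_of_card_le (A := {k | N k ≤ R})
    (d := fun t t' => N (t⁻¹ * t')) (s := s)
    (fun a => by rwa [inv_mul_cancel, hN.one])
    (fun a b => by rw [← hN.inv, mul_inv_rev, inv_inv]) hK
  have hs_finite := hN.finite_setOf_le s
  have hsubset : {k | N k ≤ R} ⊆
      ((T ×ˢ hs_finite.toFinset).image fun p => p.1 * p.2 : Finset G) := by
    intro a ha
    obtain ⟨t, ht, hat⟩ := hcover a ha
    have hta : N (t⁻¹ * a) ≤ s := by rwa [← hN.inv, mul_inv_rev, inv_inv]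
    exact Finset.mem_coe.2 (Finset.mem_image.2 ⟨(t, t⁻¹ * a),
      Finset.mem_product.2 ⟨ht, hs_finite.mem_toFinset.2 hta⟩, mul_inv_cancel_left t a⟩)
  calc {k | N k ≤ R}.ncard ≤ (T ×ˢ hs_finite.toFinset).card := by
        refine (Set.ncard_le_ncard hsubset (Finset.finite_toSet _)).trans ?_
        rw [Set.ncard_coe_finset]
        exact Finset.card_image_le
    _ ≤ K * {k | N k ≤ s}.ncard := by
        rw [Finset.card_product, Set.ncard_eq_toFinset_card _ hs_finite]
        exact Nat.mul_le_mul_right _ (hK T hTR hTsep)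

theorem exists_forall_le_div_two_pow_eq_zero (hN : IsProperLength N) (ρ : ℝ) :
    ∃ j : ℕ, ∀ g, N g ≤ ρ / 2 ^ j → N g = 0 := by
  have hlim : Tendsto (fun j : ℕ => ρ / 2 ^ j) atTop (𝓝 0) :=
    tendsto_const_nhds.div_atTop (tendsto_pow_atTop_atTop_of_one_lt one_lt_two)
  have hfar : ∀ g ∈ {g | N g ≤ 1}, ∀ᶠ j : ℕ in atTop, N g ≤ ρ / 2 ^ j → N g = 0 := by
    intro g _
    rcases (hN.nonneg g).eq_or_lt with hg | hg
    · exact .of_forall fun _ _ => hg.symm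
    · exact (hlim.eventually_lt_const hg).mono fun _ hj hle => absurd hj hle.not_gt
  obtain ⟨j, hj, hj₁⟩ := (((eventually_all_finite (hN.finite_setOf_le 1)).2 hfar).and
    (hlim.eventually_le_const one_pos)).exists
  exact ⟨j, fun g hg => hj g (hg.trans hj₁) hg⟩

theorem isVirtuallyNilpotent_closure_of_commutator_le (hN : IsProperLength N) (hρ : 0 < ρ)
    (hcomm : ∀ g h, N g ≤ ρ → N h ≤ ρ → N ⁅g, h⁆ ≤ N h / 2) :
    IsVirtuallyNilpotent (Subgroup.closure {g : G | N g ≤ ρ}) := by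
  set V : ℕ → Set G := fun j => {g | N g ≤ ρ / 2 ^ j}
  have hV₀ : V 0 = {g : G | N g ≤ ρ} := by simp [V]
  have hV : Antitone V := antitone_nat_of_succ_le fun j g (hg : N g ≤ ρ / 2 ^ (j + 1)) =>
    hg.trans (by gcongr <;> simp)
  have hinv : ∀ v ∈ V 0, v⁻¹ ∈ V 0 := fun v hv => (hN.inv v).trans_le hv
  have hVcomm : ∀ j, ∀ v ∈ V 0, ∀ w ∈ V j, ⁅v, w⁆ ∈ V (j + 1) := by
    intro j v hv w hw
    calc N ⁅v, w⁆ ≤ N w / 2 := hcomm v w (hV₀.subset hv) (hV₀.subset (hV j.zero_le hw))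
      _ ≤ ρ / 2 ^ j / 2 := by gcongr; exact hw
      _ = ρ / 2 ^ (j + 1) := by rw [pow_succ, div_div]
  obtain ⟨J, hJ⟩ := hN.exists_forall_le_div_two_pow_eq_zero ρ
  have hfinite : (Subgroup.closure (V J) : Set G).Finite := by
    refine (hN.finite_setOf_le 0).subset fun g hg => ?_
    induction hg using Subgroup.closure_induction with
    | mem w hw => exact (hJ w hw).le
    | one => exact hN.one.le
    | mul a b _ _ iha ihb => exact (hN.mul_le a b).trans (add_nonpos iha ihb)
    | inv a _ iha => exact (hN.inv a).trans_le iha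
  have : Finite (Subgroup.closure (V J)) := hfinite.to_subtype
  rw [← hV₀]
  exact isVirtuallyNilpotent_of_lowerCentralSeries_le_of_finite
    (closure_zero_le_normalizer_closure hinv hV hVcomm J)
    (lowerCentralSeries_closure_zero_le hinv hV hVcomm J)

end IsProperLength

namespace IsGCB

variable {X : Type*} [MetricSpace X] {σ : X → X → ℝ → X}

theorem dist_left (hσ : IsGCB σ) (x y : X) {t : ℝ} (ht : t ∈ Set.Icc (0 : ℝ) 1) :
    dist x (σ x y t) = t * dist x y := by
  have h := hσ.geodesic x y 0 (by simp) t ht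
  rwa [hσ.source, zero_sub, abs_neg, abs_of_nonneg ht.1] at h

theorem dist_right (hσ : IsGCB σ) (x y : X) {t : ℝ} (ht : t ∈ Set.Icc (0 : ℝ) 1) :
    dist (σ x y t) y = (1 - t) * dist x y := by
  have h := hσ.geodesic x y t ht 1 (by simp)
  rwa [hσ.target, abs_sub_comm, abs_of_nonneg (sub_nonneg.2 ht.2)] at h

theorem dist_apply_le (hσ : IsGCB σ) (x y x' y' : X) {t : ℝ} (ht : t ∈ Set.Icc (0 : ℝ) 1) :
    dist (σ x y t) (σ x' y' t) ≤ (1 - t) * dist x x' + t * dist y y' := by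
  have h := (hσ.convex x y x' y').2 (Set.left_mem_Icc.2 zero_le_one)
    (Set.right_mem_Icc.2 zero_le_one) (sub_nonneg.2 ht.2) ht.1 (by ring)
  simpa [hσ.source, hσ.target] using h

theorem displacement_le (hσ : IsGCB σ) {g : X ≃ᵢ X} (hg : IsSigmaIsometry σ g) (x y : X)
    {t : ℝ} (ht : t ∈ Set.Icc (0 : ℝ) 1) :
    dist (σ x y t) (g (σ x y t)) ≤ (1 - t) * dist x (g x) + t * dist y (g y) := by
  rw [hg x y t ht]
  exact hσ.dist_apply_le _ _ _ _ ht

theorem exists_prolongation (hσ : IsGCB σ) (x y : X) {D : ℝ} (hD : dist x y ≤ D) (hD₀ : 0 < D) :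
    ∃ w, dist x w = D ∧ dist y w = D - dist x y ∧ σ x w (dist x y / D) = y := by
  obtain ⟨γ, hγ, hγσ, hγe⟩ := hσ.geodComplete x y
  have hγx : γ 0 = x := by simpa [hσ.source] using (hγe 0 (by simp)).symm
  have hγy : γ (dist x y) = y := by simpa [hσ.target] using (hγe 1 (by simp)).symm
  have hdist (s : ℝ) (hs : s ≤ D) : dist (γ s) (γ D) = D - s := by
    rw [hγ.dist_eq, Real.dist_eq, abs_sub_comm, abs_of_nonneg (sub_nonneg.2 hs)]
  refine ⟨γ D, by simpa [hγx] using hdist 0 hD₀.le, by simpa [hγy] using hdist _ hD, ?_⟩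
  have h := hγσ 0 D hD₀.le (dist x y / D) ⟨by positivity, (div_le_one hD₀).2 hD⟩
  rwa [hγx, zero_add, sub_zero, div_mul_cancel₀ _ hD₀.ne', hγy] at h

theorem exists_dist_le_of_mem_closedBall_add (hσ : IsGCB σ) {x y : X} {ρ r : ℝ} (hρ : 0 < ρ)
    (hr : 0 ≤ r) (hy : y ∈ closedBall x (ρ + r)) : ∃ z ∈ closedBall x ρ, dist y z ≤ r := by
  rw [mem_closedBall'] at hy
  set t := ρ / (ρ + r)
  have ht : t ∈ Set.Icc (0 : ℝ) 1 :=
    ⟨by positivity, (div_le_one (by positivity)).2 (le_add_of_nonneg_right hr)⟩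
  have htρ : t * (ρ + r) = ρ := div_mul_cancel₀ _ (by positivity)
  refine ⟨σ x y t, ?_, ?_⟩
  · rw [mem_closedBall', hσ.dist_left x y ht, ← htρ]
    exact mul_le_mul_of_nonneg_left hy ht.1
  · rw [dist_comm, hσ.dist_right x y ht]
    linarith [mul_le_mul_of_nonneg_left hy (sub_nonneg.2 ht.2)]

theorem exists_dilation (hσ : IsGCB σ) (x : X) {l : ℝ} (hl : 1 ≤ l) :
    ∃ e : X → X, (∀ q, dist x (e q) = l * dist x q) ∧
      ∀ q q', l * dist q q' ≤ dist (e q) (e q') := by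
  have hl₀ : 0 < l := by linarith
  have ht : 1 / l ∈ Set.Icc (0 : ℝ) 1 := ⟨by positivity, (div_le_one hl₀).2 hl⟩
  have hprolong (q : X) : ∃ w, dist x w = l * dist x q ∧ σ x w (1 / l) = q := by
    rcases eq_or_ne x q with rfl | hxq
    · have h := hσ.dist_left x x ht
      rw [dist_self, mul_zero] at h
      exact ⟨x, by simp, (dist_eq_zero.1 h).symm⟩
    · have hd : 0 < dist x q := dist_pos.2 hxq
      obtain ⟨w, hw, -, hwq⟩ := hσ.exists_prolongation x q (D := l * dist x q)
        (le_mul_of_one_le_left hd.le hl) (by positivity)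
      refine ⟨w, hw, ?_⟩
      rwa [mul_comm, ← div_div, div_self hd.ne'] at hwq
  choose e he heσ using hprolong
  refine ⟨e, he, fun q q' => ?_⟩
  have h := hσ.dist_apply_le x (e q) x (e q') ht
  rw [heσ, heσ, dist_self, mul_zero, zero_add, one_div_mul_eq_div, le_div_iff₀ hl₀] at h
  linarith

end IsGCB

/-- Balls of radius `R` contain at most `Φ R s` points at pairwise distance larger than `s`. The
constants of the Margulis lemma and of the Tits alternative depend on `X` only through `Φ`. -/
def HasNetBound (X : Type*) [MetricSpace X] (Φ : ℝ → ℝ → ℕ) : Prop :=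
  ∀ (x : X) (R s : ℝ), 0 < s → ∀ S : Finset X, ↑S ⊆ closedBall x R →
    (S : Set X).Pairwise (s < dist · ·) → S.card ≤ Φ R s

theorem exists_net_of_card_le {X : Type*} [MetricSpace X] {A : Set X} {s : ℝ} (hs : 0 ≤ s) {K : ℕ}
    (hK : ∀ S : Finset X, ↑S ⊆ A → (S : Set X).Pairwise (s < dist · ·) → S.card ≤ K) :
    ∃ N : Finset X, ↑N ⊆ A ∧ (N : Set X).Pairwise (s < dist · ·) ∧
      ∀ y ∈ A, ∃ n ∈ N, dist y n ≤ s :=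
  exists_maximal_separated_of_card_le (by simpa only [dist_self] using fun _ => hs) dist_comm hK

namespace IsPacked

variable {X : Type*} [MetricSpace X] {σ : X → X → ℝ → X} {P₀ r₀ : ℝ}

theorem card_le_floor (hX : IsPacked X P₀ r₀) (x : X) {S : Finset X}
    (hS : ↑S ⊆ closedBall x (3 * r₀)) (hsep : (S : Set X).Pairwise (2 * r₀ < dist · ·)) :
    S.card ≤ ⌊P₀⌋₊ :=
  Nat.le_floor (hX x S hS fun _ ha _ hb => hsep ha hb)

theorem card_le_mul_card_net (hX : IsPacked X P₀ r₀) {S N : Finset X}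
    (hsep : (S : Set X).Pairwise (2 * r₀ < dist · ·))
    (hN : ∀ y ∈ S, ∃ n ∈ N, dist y n ≤ 3 * r₀) : S.card ≤ ⌊P₀⌋₊ * N.card := by
  classical
  choose! c hcN hc using hN
  refine Finset.card_le_mul_card_image_of_maps_to hcN _ fun n _ => hX.card_le_floor n ?_ ?_
  · intro y hy
    obtain ⟨hyS, rfl⟩ := Finset.mem_filter.1 hy
    exact hc y hyS
  · exact hsep.mono (Finset.coe_subset.2 (Finset.filter_subset _ _))

theorem card_le_pow (hX : IsPacked X P₀ r₀) (hσ : IsGCB σ) (hr₀ : 0 < r₀) (x : X) (n : ℕ)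
    {S : Finset X} (hS : ↑S ⊆ closedBall x (3 * r₀ + n * r₀))
    (hsep : (S : Set X).Pairwise (2 * r₀ < dist · ·)) : S.card ≤ ⌊P₀⌋₊ ^ (n + 1) := by
  induction n generalizing S with
  | zero => simpa using hX.card_le_floor x (by simpa using hS) hsep
  | succ n ih =>
    obtain ⟨N, hN, hNsep, hNet⟩ := exists_net_of_card_le (by positivity) fun T => ih (S := T)
    have hcov : ∀ y ∈ S, ∃ t ∈ N, dist y t ≤ 3 * r₀ := by
      intro y hy
      have hyx : y ∈ closedBall x (3 * r₀ + n * r₀ + r₀) := by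
        convert hS hy using 2
        push_cast
        ring
      obtain ⟨z, hz, hyz⟩ :=
        hσ.exists_dist_le_of_mem_closedBall_add (by positivity) hr₀.le hyx
      obtain ⟨t, ht, hzt⟩ := hNet z hz
      exact ⟨t, ht, by linarith [dist_triangle y z t]⟩
    calc S.card ≤ ⌊P₀⌋₊ * N.card := hX.card_le_mul_card_net hsep hcov
      _ ≤ ⌊P₀⌋₊ * ⌊P₀⌋₊ ^ (n + 1) := Nat.mul_le_mul_left _ (ih hN hNsep)
      _ = ⌊P₀⌋₊ ^ (n + 1 + 1) := (pow_succ' _ _).symm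

theorem card_le_pow_ceil (hX : IsPacked X P₀ r₀) (hσ : IsGCB σ) (hr₀ : 0 < r₀) (x : X) (R : ℝ)
    {S : Finset X} (hS : ↑S ⊆ closedBall x R)
    (hsep : (S : Set X).Pairwise (2 * r₀ < dist · ·)) :
    S.card ≤ ⌊P₀⌋₊ ^ (⌈R / r₀⌉₊ + 1) := by
  refine hX.card_le_pow hσ hr₀ x _ (hS.trans (closedBall_subset_closedBall ?_)) hsep
  have := Nat.le_ceil (R / r₀)
  rw [div_le_iff₀ hr₀] at this
  linarith

/-- The packing bound at radius `R` and scale `s` forced by packing at scale `r₀`: when `s < 2 r₀`,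
the ball is first dilated by the factor `2 r₀ / s`. -/
noncomputable def netCount (P₀ r₀ R s : ℝ) : ℕ :=
  ⌊P₀⌋₊ ^ (⌈max 1 (2 * r₀ / s) * R / r₀⌉₊ + 1)

theorem hasNetBound (hX : IsPacked X P₀ r₀) (hσ : IsGCB σ) (hr₀ : 0 < r₀) :
    HasNetBound X (netCount P₀ r₀) := by
  classical
  intro x R s hs S hS hsep
  set l := max 1 (2 * r₀ / s)
  have hl₁ : 1 ≤ l := le_max_left _ _
  have hls : 2 * r₀ ≤ l * s := (div_le_iff₀ hs).1 (le_max_right _ _)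
  obtain ⟨e, hex, he⟩ := hσ.exists_dilation x hl₁
  have hesep : (S : Set X).Pairwise fun q q' => 2 * r₀ < dist (e q) (e q') :=
    fun q hq q' hq' hne => by nlinarith [he q q', hsep hq hq' hne]
  have hinj : Set.InjOn e S := fun q hq q' hq' hqq' => by
    by_contra hne
    have : 2 * r₀ < dist (e q) (e q') := hesep hq hq' hne
    rw [hqq', dist_self] at this
    linarith
  rw [← Finset.card_image_of_injOn hinj]
  refine hX.card_le_pow_ceil hσ hr₀ x _ ?_ ?_
  · rw [Finset.coe_image, Set.image_subset_iff]
    intro q hq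
    have hqx := hS hq
    rw [mem_closedBall'] at hqx
    rw [Set.mem_preimage, mem_closedBall', hex]
    gcongr
  · rw [Finset.coe_image]
    exact hinj.pairwise_image.2 hesep

end IsPacked

section IsometryCount

variable {X : Type*} [MetricSpace X]

theorem card_le_card_pow_card_of_nets {B : Set X} {s : ℝ} {T : Finset (X ≃ᵢ X)} {N₁ N₂ : Finset X}
    (hN₁ : ∀ z ∈ B, ∃ n ∈ N₁, dist z n ≤ s / 4)
    (hN₂ : ∀ t ∈ T, ∀ n ∈ N₁, ∃ m ∈ N₂, dist (t n) m ≤ s / 8)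
    (hsep : (T : Set (X ≃ᵢ X)).Pairwise fun t t' => ∃ z ∈ B, s < dist (t z) (t' z)) :
    T.card ≤ N₂.card ^ N₁.card := by
  classical
  have hcode (t : T) (n : N₁) : ∃ m : N₂, dist (t.1 n) m ≤ s / 8 := by
    obtain ⟨m, hm, h⟩ := hN₂ t t.2 n n.2
    exact ⟨⟨m, hm⟩, h⟩
  choose c hc using hcode
  have hinj : Function.Injective c := by
    intro t t' htt'
    by_contra hne
    obtain ⟨z, hz, hd⟩ : ∃ z ∈ B, s < dist (t.1 z) (t'.1 z) :=
      hsep t.2 t'.2 (Subtype.coe_injective.ne hne)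
    obtain ⟨n, hn, hzn⟩ := hN₁ z hz
    have ht : dist (t.1 n) (c t ⟨n, hn⟩) ≤ s / 8 := hc t ⟨n, hn⟩
    have ht' : dist (t'.1 n) (c t ⟨n, hn⟩) ≤ s / 8 := htt' ▸ hc t' ⟨n, hn⟩
    have htriangle := dist_triangle4 (t.1 z) (t.1 n) (t'.1 n) (t'.1 z)
    rw [IsometryEquiv.dist_eq, IsometryEquiv.dist_eq, dist_comm n z] at htriangle
    linarith [dist_triangle_right (t.1 n) (t'.1 n) (c t ⟨n, hn⟩ : X), dist_nonneg (x := z) (y := n)]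
  simpa using Fintype.card_le_of_injective c hinj

/-- Bound for the number of isometries displacing a point at most `L` and pairwise `s`-separated
on the ball of radius `R` around this point. -/
noncomputable def isometryCount (Φ : ℝ → ℝ → ℕ) (R L s : ℝ) : ℕ :=
  (Φ (R + L) (s / 8) + 1) ^ Φ R (s / 4)

theorem HasNetBound.card_le_isometryCount {Φ : ℝ → ℝ → ℕ} (hΦ : HasNetBound X Φ) (y : X)
    {R L s : ℝ} (hs : 0 < s) (T : Finset (X ≃ᵢ X)) (hL : ∀ t ∈ T, dist y (t y) ≤ L)
    (hsep : (T : Set (X ≃ᵢ X)).Pairwise fun t t' => ∃ z ∈ closedBall y R, s < dist (t z) (t' z)) :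
    T.card ≤ isometryCount Φ R L s := by
  obtain ⟨N₁, hN₁, hN₁sep, hNet₁⟩ :=
    exists_net_of_card_le (by positivity) (hΦ y R (s / 4) (by positivity))
  obtain ⟨N₂, hN₂, hN₂sep, hNet₂⟩ :=
    exists_net_of_card_le (by positivity) (hΦ y (R + L) (s / 8) (by positivity))
  have himage : ∀ t ∈ T, ∀ n ∈ N₁, ∃ m ∈ N₂, dist (t n) m ≤ s / 8 := by
    refine fun t ht n hn => hNet₂ (t n) ?_
    have hny := hN₁ hn
    rw [mem_closedBall'] at hny ⊢
    have := dist_triangle y (t y) (t n)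
    rw [t.dist_eq] at this
    linarith [hL t ht]
  calc T.card ≤ N₂.card ^ N₁.card := card_le_card_pow_card_of_nets hNet₁ himage hsep
    _ ≤ (Φ (R + L) (s / 8) + 1) ^ N₁.card :=
        Nat.pow_le_pow_left ((hΦ y _ _ (by positivity) N₂ hN₂ hN₂sep).trans (Nat.le_succ _)) _
    _ ≤ isometryCount Φ R L s :=
        Nat.pow_le_pow_right (Nat.succ_pos _) (hΦ y _ _ (by positivity) N₁ hN₁ hN₁sep)

theorem HasNetBound.le_isometryCount {Φ : ℝ → ℝ → ℕ} (hΦ : HasNetBound X Φ) (y : X)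
    {R L s : ℝ} (hs : 0 < s) {m : ℕ} (h : ℕ → X ≃ᵢ X) (hL : ∀ i < m, dist y (h i y) ≤ L)
    (hsep : ∀ j < m, ∀ i < j, ∃ z ∈ closedBall y R, s < dist (h i z) (h j z)) :
    m ≤ isometryCount Φ R L s := by
  classical
  have hpairwise : (Finset.range m : Set ℕ).Pairwise fun i j =>
      ∃ z ∈ closedBall y R, s < dist (h i z) (h j z) := by
    intro i hi j hj hne
    rw [Finset.coe_range, Set.mem_Iio] at hi hj
    rcases hne.lt_or_gt with hij | hji
    · exact hsep j hj i hij
    · simpa only [dist_comm] using hsep i hi j hji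
  have hinj : Set.InjOn h (Finset.range m) := fun i hi j hj hij => by
    by_contra hne
    obtain ⟨z, -, hz⟩ := hpairwise hi hj hne
    rw [hij, dist_self] at hz
    exact hs.not_gt hz
  rw [← Finset.card_range m, ← Finset.card_image_of_injOn hinj]
  refine hΦ.card_le_isometryCount y hs _ ?_ ?_
  · simpa using hL
  · rw [Finset.coe_image]
    exact hinj.pairwise_image.2 hpairwise

end IsometryCount

section Isometry

variable {X : Type*} [MetricSpace X] {σ : X → X → ℝ → X}

theorem IsSigmaIsometry.pow {g : X ≃ᵢ X} (hg : IsSigmaIsometry σ g) (n : ℕ) :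
    IsSigmaIsometry σ (g ^ n) := by
  induction n with
  | zero => intro x y t _; simp
  | succ n ih =>
    intro x y t ht
    simp only [pow_succ', IsometryEquiv.mul_apply]
    rw [ih x y t ht, hg _ _ t ht]

theorem dist_inv_apply (g : X ≃ᵢ X) (z : X) : dist z (g⁻¹ z) = dist z (g z) := by
  rw [← g.dist_eq z, IsometryEquiv.apply_inv_self, dist_comm]

theorem dist_mul_apply_le (g h : X ≃ᵢ X) (z : X) :
    dist z ((g * h) z) ≤ dist z (g z) + dist z (h z) := by
  rw [IsometryEquiv.mul_apply, ← g.dist_eq z (h z)]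
  exact dist_triangle _ _ _

theorem dist_conj_apply (g k : X ≃ᵢ X) (z : X) :
    dist z ((k⁻¹ * g * k) z) = dist (k z) (g (k z)) := by
  rw [← k.dist_eq z, IsometryEquiv.mul_apply, IsometryEquiv.mul_apply, IsometryEquiv.apply_inv_self]

theorem dist_apply_le_of_mem_closedBall {y z : X} {r : ℝ} (hz : z ∈ closedBall y r)
    (g : X ≃ᵢ X) : dist z (g z) ≤ dist y (g y) + 2 * r := by
  rw [mem_closedBall] at hz
  have h := dist_triangle4 z y (g y) (g z)
  rw [g.dist_eq, dist_comm y z] at h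
  linarith

theorem IsGCB.dist_midpoint_apply_le (hσ : IsGCB σ) {g : X ≃ᵢ X} (hg : IsSigmaIsometry σ g)
    (z : X) : dist (σ z (g z) (1 / 2)) (g (σ z (g z) (1 / 2))) ≤ dist z ((g ^ 2) z) / 2 := by
  have ht : (1 / 2 : ℝ) ∈ Set.Icc (0 : ℝ) 1 := by constructor <;> norm_num
  have hreverse : σ z (g z) (1 / 2) = σ (g z) z (1 / 2) := by
    rw [hσ.reversible _ _ _ ht]
    norm_num
  have h := hσ.dist_apply_le (g z) z (g z) (g (g z)) ht
  rw [dist_self] at h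
  rw [hg _ _ _ ht, hreverse, pow_two, IsometryEquiv.mul_apply]
  linarith

/- Let `q` be the midpoint of `z` and `g z`, and prolong `[q, z]` to a segment `[q, w]` of length
`D`. The displacement of `g` is at most `d(z, g² z) / 2` at `q`, and is convex along `[q, w]`. -/
theorem IsGCB.exists_displacement_sq_ge (hσ : IsGCB σ) {g : X ≃ᵢ X} (hg : IsSigmaIsometry σ g)
    (z : X) {D : ℝ} (hD₀ : 0 < D) (hD : dist z (g z) / 2 ≤ D) :
    ∃ w, dist z w ≤ D + dist z (g z) / 2 ∧
      2 * dist z (g z) * (1 - dist w (g w) / (2 * D)) ≤ dist z ((g ^ 2) z) := by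
  set f := dist z (g z) with hf
  have hf₀ : 0 ≤ f := dist_nonneg
  set q := σ z (g z) (1 / 2)
  have hqz : dist q z = f / 2 := by
    rw [dist_comm, hσ.dist_left _ _ (by constructor <;> norm_num), ← hf]
    ring
  obtain ⟨w, -, hzw, hwz⟩ := hσ.exists_prolongation q z (hqz.le.trans hD) hD₀
  rw [hqz] at hzw hwz
  refine ⟨w, by linarith, ?_⟩
  set t := f / 2 / D with ht
  have ht₁ : t ∈ Set.Icc (0 : ℝ) 1 := ⟨by positivity, (div_le_one hD₀).2 hD⟩
  have hconvex : f ≤ (1 - t) * dist q (g q) + t * dist w (g w) := by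
    simpa only [hwz] using hσ.displacement_le hg q w ht₁
  have hq : (1 - t) * dist q (g q) ≤ dist q (g q) :=
    mul_le_of_le_one_left dist_nonneg (by linarith [ht₁.1])
  calc 2 * f * (1 - dist w (g w) / (2 * D)) = 2 * (f - t * dist w (g w)) := by
        rw [ht]
        field_simp
    _ ≤ 2 * dist q (g q) := by linarith
    _ ≤ dist z ((g ^ 2) z) := by linarith [hσ.dist_midpoint_apply_le hg z]

end Isometry

section Displacement

variable {X : Type*} [MetricSpace X] {σ : X → X → ℝ → X} {y : X} {r : ℝ}

/-- The largest displacement under `g` of a point of the ball of centre `y` and radius `r`; unlike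
the displacement of `y` alone, it almost doubles when `g` is squared. -/
noncomputable def disp (y : X) (r : ℝ) (g : X ≃ᵢ X) : ℝ :=
  ⨆ z : closedBall y r, dist (z : X) (g z)

theorem dist_le_disp {z : X} (hz : z ∈ closedBall y r) (g : X ≃ᵢ X) :
    dist z (g z) ≤ disp y r g := by
  have hbdd : BddAbove (Set.range fun z : closedBall y r => dist (z : X) (g z)) := by
    refine ⟨dist y (g y) + 2 * r, ?_⟩
    rintro _ ⟨z, rfl⟩
    exact dist_apply_le_of_mem_closedBall z.2 g
  exact le_ciSup hbdd ⟨z, hz⟩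

theorem disp_le (hr : 0 ≤ r) {g : X ≃ᵢ X} {a : ℝ} (h : ∀ z ∈ closedBall y r, dist z (g z) ≤ a) :
    disp y r g ≤ a := by
  have : Nonempty (closedBall y r) := ⟨⟨y, mem_closedBall_self hr⟩⟩
  exact ciSup_le fun z => h z z.2

theorem exists_lt_of_lt_disp (hr : 0 ≤ r) {g : X ≃ᵢ X} {a : ℝ} (h : a < disp y r g) :
    ∃ z ∈ closedBall y r, a < dist z (g z) := by
  by_contra! hle
  exact h.not_ge (disp_le hr hle)

theorem dist_center_le_disp (hr : 0 ≤ r) (g : X ≃ᵢ X) : dist y (g y) ≤ disp y r g :=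
  dist_le_disp (mem_closedBall_self hr) g

theorem disp_nonneg (y : X) (r : ℝ) (g : X ≃ᵢ X) : 0 ≤ disp y r g :=
  Real.iSup_nonneg fun _ => dist_nonneg

theorem disp_one (y : X) (r : ℝ) : disp y r 1 = 0 := by
  simp [disp]

theorem disp_inv (y : X) (r : ℝ) (g : X ≃ᵢ X) : disp y r g⁻¹ = disp y r g := by
  simp [disp, dist_inv_apply]

theorem disp_mul_le (hr : 0 ≤ r) (g h : X ≃ᵢ X) : disp y r (g * h) ≤ disp y r g + disp y r h :=
  disp_le hr fun z hz => (dist_mul_apply_le g h z).trans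
    (add_le_add (dist_le_disp hz g) (dist_le_disp hz h))

theorem disp_mono (hr : 0 ≤ r) {r' : ℝ} (h : r ≤ r') (g : X ≃ᵢ X) : disp y r g ≤ disp y r' g :=
  disp_le hr fun _ hz => dist_le_disp (closedBall_subset_closedBall h hz) g

theorem disp_pow_le (hr : 0 ≤ r) (g : X ≃ᵢ X) (n : ℕ) : disp y r (g ^ n) ≤ n * disp y r g := by
  induction n with
  | zero => simp [disp_one]
  | succ n ih =>
    rw [pow_succ]
    push_cast
    linarith [disp_mul_le (y := y) hr (g ^ n) g]

theorem disp_conj_le (hr : 0 ≤ r) {r' : ℝ} (h k : X ≃ᵢ X) (hr' : r + disp y r k ≤ r') :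
    disp y r (k⁻¹ * h * k) ≤ disp y r' h := by
  refine disp_le hr fun z hz => ?_
  rw [dist_conj_apply]
  refine dist_le_disp ?_ h
  have hkz := dist_le_disp hz k
  rw [mem_closedBall'] at hz ⊢
  linarith [dist_triangle y z (k z)]

theorem two_mul_disp_le_disp_sq (hσ : IsGCB σ) {g : X ≃ᵢ X} (hg : IsSigmaIsometry σ g) (y : X)
    {s D b : ℝ} (hs : 0 ≤ s) (hD : 0 < D) (hb : disp y (s + 2 * D) g ≤ b) (hbD : b ≤ D) :
    2 * disp y s g * (1 - b / (2 * D)) ≤ disp y s (g ^ 2) := by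
  have hc : 0 < 2 * (1 - b / (2 * D)) := by
    have : b / (2 * D) ≤ 1 / 2 := by
      rw [div_le_div_iff₀ (by positivity) (by norm_num)]
      linarith
    linarith
  suffices h : disp y s g ≤ disp y s (g ^ 2) / (2 * (1 - b / (2 * D))) by
    rw [le_div_iff₀ hc] at h
    linarith
  refine disp_le hs fun z hz => ?_
  rw [le_div_iff₀ hc]
  have hzb : dist z (g z) ≤ b :=
    (dist_le_disp (closedBall_subset_closedBall (by linarith) hz) g).trans hb
  obtain ⟨w, hw, hsq⟩ := hσ.exists_displacement_sq_ge hg z hD (by linarith)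
  have hwb : dist w (g w) ≤ b := by
    refine (dist_le_disp ?_ g).trans hb
    rw [mem_closedBall'] at hz ⊢
    linarith [dist_triangle y z w]
  calc dist z (g z) * (2 * (1 - b / (2 * D))) = 2 * dist z (g z) * (1 - b / (2 * D)) := by ring
    _ ≤ 2 * dist z (g z) * (1 - dist w (g w) / (2 * D)) := by gcongr
    _ ≤ dist z ((g ^ 2) z) := hsq
    _ ≤ disp y s (g ^ 2) := dist_le_disp hz _

theorem disp_le_geometric_of_disp_pow_le (hσ : IsGCB σ) {g : X ≃ᵢ X} (hg : IsSigmaIsometry σ g)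
    (y : X) {s D : ℝ} (hs : 0 ≤ s) (hD : 0 < D) (n : ℕ)
    (h : ∀ i ≤ n, disp y (s + 2 * D) (g ^ 2 ^ i) ≤ D / 12) :
    disp y s g ≤ (2 / 3) ^ n * (D / 12) := by
  induction n generalizing g with
  | zero =>
    have := (disp_mono hs (by linarith) _).trans (h 0 le_rfl)
    simpa using this
  | succ n ih =>
    have hsq : disp y s (g ^ 2) ≤ (2 / 3) ^ n * (D / 12) := by
      refine ih (hg.pow 2) fun i hi => ?_
      rw [← pow_mul, ← pow_succ']
      exact h _ (by omega)
    have hdouble := two_mul_disp_le_disp_sq hσ hg y hs hD (by simpa using h 0 (Nat.zero_le _))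
      (by linarith)
    have hratio : D / 12 / (2 * D) = 1 / 24 := by
      field_simp
      norm_num
    rw [hratio] at hdouble
    rw [pow_succ]
    linarith [disp_nonneg y s g]

/- By `disp_le_geometric_of_disp_pow_le` the doubling errors decay geometrically, so that their
product stays bounded. -/
theorem disp_mul_two_pow_le_of_disp_pow_le (hσ : IsGCB σ) {g : X ≃ᵢ X} (hg : IsSigmaIsometry σ g)
    (y : X) {s D : ℝ} (hs : 0 ≤ s) (hD : 0 < D) (n : ℕ)
    (h : ∀ i ≤ n, disp y (s + 4 * D) (g ^ 2 ^ i) ≤ D / 12) :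
    disp y s g * 2 ^ n ≤ (2 - (2 / 3) ^ n) * (D / 12) := by
  induction n generalizing g with
  | zero =>
    have := (disp_mono hs (by linarith) _).trans (h 0 le_rfl)
    simp only [pow_zero, pow_one] at this ⊢
    linarith
  | succ n ih =>
    have hsq : disp y s (g ^ 2) * 2 ^ n ≤ (2 - (2 / 3) ^ n) * (D / 12) := by
      refine ih (hg.pow 2) fun i hi => ?_
      rw [← pow_mul, ← pow_succ']
      exact h _ (by omega)
    set q : ℝ := (2 / 3) ^ (n + 1) with hq
    have hq₀ : 0 < q := by positivity
    have hq₁ : q ≤ 1 := pow_le_one₀ (by norm_num) (by norm_num)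
    have hpow : (2 / 3 : ℝ) ^ n = 3 / 2 * q := by
      rw [hq, pow_succ]
      ring
    have hb : disp y (s + 2 * D) g ≤ q * (D / 12) :=
      disp_le_geometric_of_disp_pow_le hσ hg y (by positivity) hD (n + 1) fun i hi => by
        convert h i hi using 2
        ring
    have hdouble := two_mul_disp_le_disp_sq hσ hg y hs hD hb (by nlinarith)
    have hratio : q * (D / 12) / (2 * D) = q / 24 := by
      field_simp
      norm_num
    rw [hratio] at hdouble
    refine le_of_mul_le_mul_right ?_ (show 0 < 1 - q / 24 by linarith)
    calc disp y s g * 2 ^ (n + 1) * (1 - q / 24)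
        = 2 * disp y s g * (1 - q / 24) * 2 ^ n := by ring
      _ ≤ disp y s (g ^ 2) * 2 ^ n := by gcongr
      _ ≤ (2 - 3 / 2 * q) * (D / 12) := hpow ▸ hsq
      _ ≤ (2 - q) * (1 - q / 24) * (D / 12) := by
          gcongr
          nlinarith
      _ = (2 - q) * (D / 12) * (1 - q / 24) := by ring

end Displacement

theorem mul_le_of_forall_two_pow {a b x e : ℝ} (ha : 0 ≤ a) (hab : a < b) (hx : 0 ≤ x)
    (h : ∀ n : ℕ, 2 ^ n * a < b → x * 2 ^ n ≤ e) : x * b ≤ 2 * e * a := by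
  rcases ha.eq_or_lt with rfl | ha
  · rcases hx.eq_or_lt with rfl | hx
    · simp
    · obtain ⟨n, hn⟩ := pow_unbounded_of_one_lt (e / x) (one_lt_two (α := ℝ))
      rw [div_lt_iff₀' hx] at hn
      exact absurd (h n (by simpa using hab)) hn.not_ge
  · obtain ⟨m, hmin, hmax⟩ := exists_mem_Ioc_zpow (div_pos (ha.trans hab) ha) (one_lt_two (α := ℝ))
    have hm : 0 ≤ m := by
      have h1 : (2 : ℝ) ^ (0 : ℤ) < 2 ^ (m + 1) := by
        rw [zpow_zero]
        exact ((one_lt_div ha).2 hab).trans_le hmax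
      have := (zpow_lt_zpow_iff_right₀ one_lt_two).1 h1
      omega
    lift m to ℕ using hm
    rw [zpow_natCast, lt_div_iff₀ ha] at hmin
    rw [← Nat.cast_succ, zpow_natCast, div_le_iff₀ ha] at hmax
    calc x * b ≤ x * (2 ^ (m + 1) * a) := by gcongr
      _ = 2 * (x * 2 ^ m) * a := by ring
      _ ≤ 2 * e * a := by
          gcongr
          exact h m hmin

section GoodRadius

variable {X : Type*} [MetricSpace X] {σ : X → X → ℝ → X}

/- The displacement is convex along the segment through a point of the small ball and a point of the
large one, so prolonging this segment up to length one makes it definite. -/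
theorem exists_lt_dist_of_disp_jump (hσ : IsGCB σ) {u : X ≃ᵢ X} (hu : IsSigmaIsometry σ u) {y : X}
    {r D : ℝ} (hr : 0 ≤ r) (hD : 0 < D) (hD₁ : 5 * D ≤ 1) (hsmall : disp y r u ≤ D / 50)
    (hlarge : D / 12 - D / 50 < disp y (r + 5 * D) u) :
    ∃ w ∈ closedBall y (r + 1), 1 / 200 < dist w (u w) := by
  obtain ⟨z, hz, hzu⟩ := exists_lt_of_lt_disp (by positivity) hlarge
  rw [mem_closedBall'] at hz
  have hrz : r < dist y z := by
    by_contra! hle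
    linarith [dist_le_disp (mem_closedBall'.2 hle) u]
  have hyz : 0 < dist y z := hr.trans_lt hrz
  have ht : r / dist y z ∈ Set.Icc (0 : ℝ) 1 := ⟨by positivity, (div_le_one hyz).2 hrz.le⟩
  set q := σ y z (r / dist y z) with hq
  have hyq : dist y q = r := by
    rw [hq, hσ.dist_left _ _ ht, div_mul_cancel₀ _ hyz.ne']
  have hqz : dist q z = dist y z - r := by
    rw [hq, hσ.dist_right _ _ ht]
    field_simp
  obtain ⟨w, hw, -, hwz⟩ := hσ.exists_prolongation q z (D := 1) (by linarith) one_pos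
  rw [div_one] at hwz
  refine ⟨w, mem_closedBall'.2 (by linarith [dist_triangle y q w]), ?_⟩
  have hs : dist q z ∈ Set.Icc (0 : ℝ) 1 := ⟨dist_nonneg, by linarith⟩
  have hconvex : dist z (u z) ≤ (1 - dist q z) * dist q (u q) + dist q z * dist w (u w) := by
    simpa only [hwz] using hσ.displacement_le hu q w hs
  have hqu : (1 - dist q z) * dist q (u q) ≤ D / 50 :=
    (mul_le_of_le_one_left dist_nonneg (by linarith [hs.1])).trans
      ((dist_le_disp (mem_closedBall'.2 hyq.le) u).trans hsmall)
  by_contra! hwu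
  have : dist q z * dist w (u w) ≤ 5 * D * (1 / 200) := by
    gcongr
    linarith
  linarith

theorem exists_lt_dist_of_disp_jump_pair (hσ : IsGCB σ) {g h : X ≃ᵢ X}
    (hgh : IsSigmaIsometry σ (g⁻¹ * h)) {y : X} {r r' D : ℝ} (hr : 0 ≤ r) (hD : 0 < D)
    (hD₁ : 5 * D ≤ 1) (hrr' : r + 5 * D ≤ r') (hg : disp y r g ≤ D / 100)
    (hg' : D / 12 < disp y (r + 5 * D) g) (hh : disp y r' h ≤ D / 100) :
    ∃ w ∈ closedBall y (r + 1), 1 / 200 < dist (g w) (h w) := by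
  have hsmall : disp y r (g⁻¹ * h) ≤ D / 50 := by
    have := disp_mul_le (y := y) hr g⁻¹ h
    rw [disp_inv] at this
    linarith [disp_mono (y := y) hr (by linarith : r ≤ r') h]
  have hlarge : D / 12 - D / 50 < disp y (r + 5 * D) (g⁻¹ * h) := by
    have hr' : 0 ≤ r + 5 * D := by positivity
    have := disp_mul_le (y := y) hr' h (g⁻¹ * h)⁻¹
    rw [disp_inv, show h * (g⁻¹ * h)⁻¹ = g by group] at this
    linarith [disp_mono (y := y) hr' hrr' h]
  obtain ⟨w, hw, hd⟩ := exists_lt_dist_of_disp_jump hσ hgh hr hD hD₁ hsmall hlarge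
  refine ⟨w, hw, ?_⟩
  rwa [← g.dist_eq, IsometryEquiv.mul_apply, IsometryEquiv.apply_inv_self] at hd

/-- At a good radius `r`, the elements of `Γ` with small displacement on the ball of radius `r` have
controlled displacement on the ball of radius `r + 5 * D`. -/
def IsGoodRadius (Γ : Subgroup (X ≃ᵢ X)) (y : X) (D r : ℝ) : Prop :=
  ∀ h ∈ Γ, disp y r h ≤ D / 100 → disp y (r + 5 * D) h ≤ D / 12

/- Elements violating the conclusion at `m` consecutive radii would be pairwise separated. -/
theorem exists_good_radius (hσ : IsGCB σ) {Φ : ℝ → ℝ → ℕ} (hΦ : HasNetBound X Φ)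
    {Γ : Subgroup (X ≃ᵢ X)} (hΓ : ∀ g ∈ Γ, IsSigmaIsometry σ g) (y : X) {m : ℕ}
    (hm : isometryCount Φ 3 1 (1 / 200) < m) {D : ℝ} (hD : D = 1 / (5 * m)) :
    ∃ r, 1 ≤ r ∧ r + 5 * D ≤ 2 ∧ IsGoodRadius Γ y D r := by
  have hm₁ : (1 : ℝ) ≤ m := by exact_mod_cast Nat.one_le_of_lt hm
  have hD₀ : 0 < D := by
    rw [hD]
    positivity
  have hDm : 5 * D * m = 1 := by
    rw [hD]
    field_simp
  have hD₁ : 5 * D ≤ 1 := by nlinarith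
  by_contra! hbad
  simp only [IsGoodRadius, not_forall, not_le, exists_prop] at hbad
  let radius (j : ℕ) : ℝ := 1 + 5 * D * j
  have hradius₁ (j : ℕ) : 1 ≤ radius j := le_add_of_nonneg_right (by positivity)
  have hstep {i j : ℕ} (hij : i < j) : radius i + 5 * D ≤ radius j := by
    have : (i : ℝ) + 1 ≤ j := by exact_mod_cast hij
    simp only [radius]
    nlinarith
  have hradius₂ {j : ℕ} (hj : j < m) : radius j + 5 * D ≤ 2 :=
    (hstep hj).trans (by simp only [radius]; linarith)
  have hjump (j : ℕ) (hj : j < m) : ∃ h ∈ Γ, disp y (radius j) h ≤ D / 100 ∧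
      D / 12 < disp y (radius j + 5 * D) h := hbad _ (hradius₁ j) (hradius₂ hj)
  choose! h hhΓ hsmall hlarge using hjump
  refine hm.not_ge
    (hΦ.le_isometryCount y (by norm_num) h (fun j hj => ?_) fun j hj i hij => ?_)
  · linarith [dist_center_le_disp (y := y) (zero_le_one.trans (hradius₁ j)) (h j), hsmall j hj]
  · have hi := hij.trans hj
    obtain ⟨w, hw, hd⟩ := exists_lt_dist_of_disp_jump_pair hσ
      (hΓ _ (Γ.mul_mem (Γ.inv_mem (hhΓ i hi)) (hhΓ j hj))) (zero_le_one.trans (hradius₁ i)) hD₀ hD₁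
      (hstep hij) (hsmall i hi) (hlarge i hi) (hsmall j hj)
    exact ⟨w, closedBall_subset_closedBall (by linarith [hradius₂ hi]) hw, hd⟩

/- If the powers `g ^ n` stay small on the ball of radius `r` for all `n < b / a`, they do so on a
larger ball, where displacements double along squarings: hence `g` moves by `O(a / b)`. -/
theorem IsGoodRadius.disp_mul_le (hσ : IsGCB σ) {Γ : Subgroup (X ≃ᵢ X)}
    (hΓ : ∀ g ∈ Γ, IsSigmaIsometry σ g) {y : X} {r D : ℝ} (hr : 0 ≤ r) (hD : 0 < D)
    (hgood : IsGoodRadius Γ y D r) {g : X ≃ᵢ X} (hg : g ∈ Γ) {a b : ℝ} (ha : 0 ≤ a) (hab : a < b)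
    (h : ∀ n : ℕ, n * a < b → disp y r (g ^ n) ≤ D / 100) :
    disp y (r + D) g * b ≤ D / 3 * a := by
  have hdyadic : ∀ n : ℕ, 2 ^ n * a < b → disp y (r + D) g * 2 ^ n ≤ D / 6 := by
    intro n hn
    have hpow : ∀ i ≤ n, disp y (r + D + 4 * D) (g ^ 2 ^ i) ≤ D / 12 := by
      intro i hi
      rw [show r + D + 4 * D = r + 5 * D by ring]
      refine hgood _ (Γ.pow_mem hg _) (h _ (lt_of_le_of_lt ?_ hn))
      push_cast
      gcongr
      norm_num
    have hpos : 0 ≤ (2 / 3 : ℝ) ^ n * (D / 12) := by positivity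
    linarith [disp_mul_two_pow_le_of_disp_pow_le hσ (hΓ g hg) y (by positivity) hD n hpow]
  have := mul_le_of_forall_two_pow ha hab (disp_nonneg y (r + D) g) hdyadic
  linarith

end GoodRadius

section Margulis

open scoped commutatorElement Pointwise

section

variable {X : Type*} [MetricSpace X] {σ : X → X → ℝ → X} {Γ : Subgroup (X ≃ᵢ X)} {y : X} {r D : ℝ}

theorem isProperLength_disp (hdisc : IsDiscreteSubgroup Γ) (y : X) (hr : 0 ≤ r) :
    IsProperLength fun g : Γ => disp y r (g : X ≃ᵢ X) where
  one := disp_one y r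
  inv g := disp_inv y r g
  mul_le g h := disp_mul_le hr (g : X ≃ᵢ X) (h : X ≃ᵢ X)
  finite_setOf_le R :=
    ((hdisc y R).preimage Subtype.val_injective.injOn).subset fun g (hg : disp y r g ≤ R) =>
      ⟨g.2, (dist_center_le_disp hr _).trans hg⟩

theorem ncard_disp_le_isometryCount_mul_ncard {Φ : ℝ → ℝ → ℕ} (hΦ : HasNetBound X Φ)
    (hdisc : IsDiscreteSubgroup Γ) (y : X) (hr : 0 ≤ r) (hr₂ : r ≤ 2) {R s : ℝ} (hR : R ≤ 1)
    (hs : 0 < s) :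
    {k : Γ | disp y r (k : X ≃ᵢ X) ≤ R}.ncard ≤
      isometryCount Φ 2 1 s * {k : Γ | disp y r (k : X ≃ᵢ X) ≤ s}.ncard := by
  classical
  refine (isProperLength_disp hdisc y hr).ncard_le_mul_ncard_of_card_le hs.le fun T hTR hTsep => ?_
  rw [← Finset.card_image_of_injective T Subtype.val_injective]
  refine hΦ.card_le_isometryCount y hs _ ?_ ?_
  · simp only [Finset.mem_image]
    rintro _ ⟨t, ht, rfl⟩
    exact (dist_center_le_disp hr _).trans ((hTR t ht).trans hR)
  · rw [Finset.coe_image]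
    refine (Subtype.val_injective.injOn.pairwise_image).2 fun t ht t' ht' hne => ?_
    obtain ⟨z, hz, hd⟩ := exists_lt_of_lt_disp hr (hTsep ht ht' hne)
    refine ⟨z, closedBall_subset_closedBall hr₂ hz, ?_⟩
    rw [← (t : X ≃ᵢ X).dist_eq] at hd
    simpa [IsometryEquiv.mul_apply, IsometryEquiv.apply_inv_self] using hd

namespace IsGoodRadius

theorem disp_conj_le (hσ : IsGCB σ) (hΓ : ∀ g ∈ Γ, IsSigmaIsometry σ g) (hr : 0 ≤ r)
    (hD : 0 < D) (hgood : IsGoodRadius Γ y D r) {h k : X ≃ᵢ X} (hhΓ : h ∈ Γ)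
    (hh : disp y r h ≤ D / 200) (hk : disp y r k ≤ D) :
    disp y r (k⁻¹ * h * k) ≤ 34 * disp y r h := by
  have hh₀ := disp_nonneg y r h
  have hle := hgood.disp_mul_le hσ hΓ hr hD hhΓ (b := D / 100) hh₀ (by linarith)
    fun n hn => (_root_.disp_pow_le hr h n).trans hn.le
  have : disp y (r + D) h ≤ 34 * disp y r h := by
    refine le_of_mul_le_mul_right (a := D / 100) ?_ (by positivity)
    nlinarith
  exact (_root_.disp_conj_le hr h k (by linarith)).trans this

theorem disp_commutator_mul_sq_le (hσ : IsGCB σ) {Φ : ℝ → ℝ → ℕ} (hΦ : HasNetBound X Φ)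
    (hΓ : ∀ g ∈ Γ, IsSigmaIsometry σ g) (hdisc : IsDiscreteSubgroup Γ) (hr : 0 ≤ r) (hr₂ : r ≤ 2)
    (hD : 0 < D) (hD₁ : D ≤ 1) (hgood : IsGoodRadius Γ y D r) {K : ℝ}
    (hK : K = isometryCount Φ 2 1 (D / 400)) {g h : Γ} (hg : disp y r (g : X ≃ᵢ X) ≤ D / 200)
    (hh : disp y r (h : X ≃ᵢ X) ≤ D / 200)
    (hgh : 272 * K * (disp y r (g : X ≃ᵢ X) * disp y r (h : X ≃ᵢ X)) < (D / 200) ^ 2) :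
    disp y r (⁅g, h⁆ : Γ) * (D / 200) ^ 2 ≤
      D / 3 * (272 * K * (disp y r (g : X ≃ᵢ X) * disp y r (h : X ≃ᵢ X))) := by
  set N : Γ → ℝ := fun g => disp y r (g : X ≃ᵢ X)
  have hN : IsProperLength N := isProperLength_disp hdisc y hr
  have hconj {h : Γ} (hh : N h ≤ D / 200) (k : Γ) (hk : N k ≤ 2 * (D / 200)) :
      N (k⁻¹ * h * k) ≤ 34 * N h :=
    hgood.disp_conj_le hσ hΓ hr hD h.2 hh (hk.trans (by linarith))
  have hball : 0 < ({k | N k ≤ D / 200 / 2}.ncard : ℝ) := by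
    rw [Nat.cast_pos, Set.ncard_pos (hN.finite_setOf_le _)]
    exact ⟨1, hN.one.trans_le (by positivity)⟩
  have hdouble : ({k | N k ≤ 2 * (D / 200)}.ncard : ℝ) ≤
      K * {k | N k ≤ D / 200 / 2}.ncard := by
    have := ncard_disp_le_isometryCount_mul_ncard hΦ hdisc y hr hr₂ (R := 2 * (D / 200))
      (s := D / 200 / 2) (by linarith) (by positivity)
    rw [show D / 200 / 2 = D / 400 by ring] at this ⊢
    rw [hK]
    exact_mod_cast this
  have hnonneg : 0 ≤ N g * N h := mul_nonneg (hN.nonneg g) (hN.nonneg h)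
  refine le_trans ?_ (hgood.disp_mul_le hσ hΓ hr hD (⁅g, h⁆ : Γ).2
    (by rw [hK]; positivity) hgh fun n hn => ?_)
  · gcongr
    exact disp_mono hr (by linarith) _
  by_contra! hfar
  have hlong : 2 * (D / 200) ≤ N (⁅g, h⁆ ^ n) := by
    rw [show 2 * (D / 200) = D / 100 by ring]
    exact_mod_cast hfar.le
  have hsq := hN.ncard_mul_sq_le_of_lt_commutator_pow (by positivity) hg hh (hconj hg) (hconj hh)
    hlong
  refine hn.not_ge (le_of_mul_le_mul_left ?_ hball)
  calc _ ≤ _ := hsq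
    _ ≤ 8 * n * (K * {k | N k ≤ D / 200 / 2}.ncard) * (34 * (N g * N h)) := by gcongr
    _ = _ := by ring

end IsGoodRadius

end

/- Margulis lemma: at a good radius the length of `⁅g, h⁆` is `O(N g * N h)`, hence less than
`N h / 2` for short `g`. -/
theorem exists_margulis_constant (Φ : ℝ → ℝ → ℕ) :
    ∃ ε : ℝ, 0 < ε ∧ ∀ (X : Type*) [MetricSpace X] (σ : X → X → ℝ → X), IsGCB σ →
      HasNetBound X Φ → ∀ Γ : Subgroup (X ≃ᵢ X), (∀ g ∈ Γ, IsSigmaIsometry σ g) →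
      IsDiscreteSubgroup Γ → ∀ y : X, ∃ A : Subgroup (X ≃ᵢ X), IsVirtuallyNilpotent A ∧
        ∀ g ∈ Γ, disp y 2 g ≤ ε → g ∈ A := by
  set m : ℕ := isometryCount Φ 3 1 (1 / 200) + 1
  have hm : (1 : ℝ) ≤ m := by exact_mod_cast Nat.le_add_left 1 _
  set D : ℝ := 1 / (5 * m) with hD
  have hD₀ : 0 < D := by positivity
  have hD₁ : D ≤ 1 := (div_le_one (by positivity)).2 (by linarith)
  set K : ℝ := ((isometryCount Φ 2 1 (D / 400) : ℕ) : ℝ) with hK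
  have hK₀ : 0 ≤ K := Nat.cast_nonneg _
  set ε : ℝ := (D / 200) ^ 2 / (544 * (K + 1)) with hε
  have hε₀ : 0 < ε := by positivity
  have hεK : 544 * (K + 1) * ε = (D / 200) ^ 2 := by rw [hε]; field_simp
  have hεD : ε ≤ D / 200 := by nlinarith
  refine ⟨ε, hε₀, fun X _ σ hσ hΦ Γ hΓ hdisc y => ?_⟩
  obtain ⟨r, hr₁, hr₂, hgood⟩ := exists_good_radius hσ hΦ hΓ y (m := m) (Nat.lt_succ_self _) hD
  have hr₀ : 0 ≤ r := by linarith
  have hN := isProperLength_disp hdisc y hr₀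
  have hcomm (g h : Γ) (hg : disp y r (g : X ≃ᵢ X) ≤ ε) (hh : disp y r (h : X ≃ᵢ X) ≤ ε) :
      disp y r (⁅g, h⁆ : Γ) ≤ disp y r (h : X ≃ᵢ X) / 2 := by
    have hg₀ := disp_nonneg y r (g : X ≃ᵢ X)
    have hh₀ := disp_nonneg y r (h : X ≃ᵢ X)
    have hgh : 272 * K * (disp y r (g : X ≃ᵢ X) * disp y r (h : X ≃ᵢ X)) ≤
        (D / 200) ^ 2 / 2 * disp y r (h : X ≃ᵢ X) := by
      calc _ ≤ 272 * (K + 1) * (ε * disp y r (h : X ≃ᵢ X)) := by gcongr; linarith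
        _ = _ := by rw [← hεK]; ring
    have hsq := hgood.disp_commutator_mul_sq_le hσ hΦ hΓ hdisc hr₀ (by linarith) hD₀ hD₁ hK
      (hg.trans hεD) (hh.trans hεD) (by nlinarith)
    refine le_of_mul_le_mul_right (a := (D / 200) ^ 2) ?_ (by positivity)
    calc _ ≤ _ := hsq
      _ ≤ 1 * ((D / 200) ^ 2 / 2 * disp y r (h : X ≃ᵢ X)) := by gcongr; linarith
      _ = _ := by ring
  refine ⟨(Subgroup.closure {g : Γ | disp y r (g : X ≃ᵢ X) ≤ ε}).map Γ.subtype,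
    (hN.isVirtuallyNilpotent_closure_of_commutator_le hε₀ hcomm).map_subtype, fun g hg hgε => ?_⟩
  refine Subgroup.mem_map.2 ⟨⟨g, hg⟩, Subgroup.subset_closure ?_, rfl⟩
  exact (disp_mono hr₀ (by linarith) g).trans hgε

theorem relIndex_closure_ne_zero_of_pow_finite {G : Type*} [Group G] {A : Subgroup G} {S : Set G}
    (hS₁ : 1 ∈ S) (hSinv : ∀ g ∈ S, g⁻¹ ∈ S) {k : ℕ} (hfin : (S ^ k).Finite)
    (hk : ∀ w ∈ S ^ (k + 1), ∃ w' ∈ S ^ k, w'⁻¹ * w ∈ A) :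
    A.relIndex (Subgroup.closure S) ≠ 0 := by
  have hstep : ∀ s ∈ S, ∀ w, (∃ f ∈ S ^ k, f⁻¹ * w ∈ A) → ∃ f ∈ S ^ k, f⁻¹ * (s * w) ∈ A := by
    rintro s hs w ⟨f, hf, hfw⟩
    obtain ⟨f', hf', hff'⟩ := hk (s * f) (by rw [pow_succ']; exact Set.mul_mem_mul hs hf)
    exact ⟨f', hf', by simpa [mul_assoc] using A.mul_mem hff' hfw⟩
  refine relIndex_ne_zero_of_finite_cover hfin fun w hw => ?_
  induction hw using Subgroup.closure_induction_left with
  | one => exact ⟨1, Set.one_mem_pow hS₁, by simp⟩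
  | mul_left s hs w _ ih => exact hstep s hs w ih
  | inv_mul_cancel s hs w _ ih => exact hstep _ (hSinv s hs) w ih

/- Among the cosets of a virtually nilpotent `A` met by `S, S ^ 2, …` only boundedly many are
distinct, so some `S ^ k` already meets every coset met by `S ^ (k + 1)`. -/
theorem exists_isVirtuallyNilpotent_closure (Φ : ℝ → ℝ → ℕ) (L : ℝ) :
    ∃ M : ℕ, ∀ (X : Type*) [MetricSpace X] (σ : X → X → ℝ → X), IsGCB σ →
      HasNetBound X Φ → ∀ Γ : Subgroup (X ≃ᵢ X), (∀ g ∈ Γ, IsSigmaIsometry σ g) →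
      IsDiscreteSubgroup Γ → ∀ (y : X) (S : Set (X ≃ᵢ X)), S ⊆ Γ → 1 ∈ S →
        (∀ g ∈ S, g⁻¹ ∈ S) → (∀ g ∈ S ^ (M + 1), dist y (g y) ≤ L) →
        IsVirtuallyNilpotent (Subgroup.closure S) := by
  obtain ⟨ε, hε, hmargulis⟩ := exists_margulis_constant Φ
  set M := isometryCount Φ 2 L ε
  refine ⟨M, fun X _ σ hσ hΦ Γ hΓ hdisc y S hSΓ hS₁ hSinv hL => ?_⟩
  obtain ⟨A, hAnil, hA⟩ := hmargulis X σ hσ hΦ Γ hΓ hdisc y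
  have hpowΓ (k : ℕ) : S ^ k ⊆ Γ := Subgroup.pow_subset hSΓ
  have hpow {i j : ℕ} (hij : i ≤ j) : S ^ i ⊆ S ^ j := Set.pow_subset_pow_right hS₁ hij
  by_contra hnil
  have hnew (k : ℕ) (hk : k < M + 1) : ∃ w ∈ S ^ (k + 1), ∀ w' ∈ S ^ k, w'⁻¹ * w ∉ A := by
    by_contra! hcover
    have hfin : (S ^ k).Finite := (hdisc y L).subset fun g hg => ⟨hpowΓ k hg, hL g (hpow hk.le hg)⟩
    exact hnil (hAnil.of_relIndex_ne_zero
      (relIndex_closure_ne_zero_of_pow_finite hS₁ hSinv hfin hcover))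
  choose! w hw hwA using hnew
  refine (Nat.lt_succ_self M).not_ge (hΦ.le_isometryCount y hε (R := 2) (L := L) w
    (fun j hj => hL _ (hpow hj (hw j hj))) fun j hj i hij => ?_)
  have hi := hij.trans hj
  have hmem : (w i)⁻¹ * w j ∈ Γ := Γ.mul_mem (Γ.inv_mem (hpowΓ _ (hw i hi))) (hpowΓ _ (hw j hj))
  have hlarge : ε < disp y 2 ((w i)⁻¹ * w j) :=
    not_le.1 fun hle => hwA j hj (w i) (hpow hij (hw i hi)) (hA _ hmem hle)
  obtain ⟨z, hz, hd⟩ := exists_lt_of_lt_disp (by norm_num) hlarge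
  refine ⟨z, hz, ?_⟩
  rwa [← (w i).dist_eq, IsometryEquiv.mul_apply, IsometryEquiv.apply_inv_self] at hd

end Margulis

section GromovProduct

/-- The Gromov product `(x|z)_p`. In a hyperbolic space it is roughly the length along which
geodesics from `p` to `x` and from `p` to `z` fellow-travel. -/
noncomputable def gromovProd {X : Type*} [MetricSpace X] (p x z : X) : ℝ :=
  (dist p x + dist p z - dist x z) / 2

variable {X : Type*} [MetricSpace X] {δ : ℝ}

theorem dist_inv_apply_left (g : X ≃ᵢ X) (x z : X) : dist (g⁻¹ x) z = dist x (g z) := by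
  rw [← g.dist_eq (g⁻¹ x), IsometryEquiv.apply_inv_self]

theorem gromovProd_comm (p x z : X) : gromovProd p x z = gromovProd p z x := by
  rw [gromovProd, gromovProd, dist_comm x z, add_comm]

theorem gromovProd_nonneg (p x z : X) : 0 ≤ gromovProd p x z := by
  rw [gromovProd]
  linarith [dist_triangle_left x z p]

theorem gromovProd_self_right (p x : X) : gromovProd p x p = 0 := by
  rw [gromovProd, dist_self, dist_comm x p]
  ring

theorem gromovProd_self (p x : X) : gromovProd p x x = dist p x := by
  rw [gromovProd, dist_self]
  ring

theorem gromovProd_inv_apply (g : X ≃ᵢ X) (p : X) :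
    gromovProd p (g⁻¹ p) (g p) = dist p (g p) - dist p ((g ^ 2) p) / 2 := by
  rw [gromovProd, dist_inv_apply, dist_inv_apply_left, pow_two, IsometryEquiv.mul_apply]
  ring

theorem gromovProd_apply_apply (g : X ≃ᵢ X) (p z : X) :
    gromovProd p (g p) (g z) = dist p (g p) - gromovProd p (g⁻¹ p) z := by
  rw [gromovProd, gromovProd, dist_inv_apply, dist_inv_apply_left, g.dist_eq]
  ring

namespace IsDeltaHyperbolic

theorem nonneg (hX : IsDeltaHyperbolic X δ) (x : X) : 0 ≤ δ := by
  have := hX x x x x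
  simp only [dist_self, add_zero, max_self, zero_add] at this
  linarith

theorem dist_add_dist_le_or (hX : IsDeltaHyperbolic X δ) (x y z w : X) :
    dist x y + dist z w ≤ dist x z + dist y w + 2 * δ ∨
      dist x y + dist z w ≤ dist x w + dist y z + 2 * δ := by
  rw [← le_max_iff, max_add_add_right]
  exact hX x y z w

theorem gromovProd_le_or (hX : IsDeltaHyperbolic X δ) (p x w z : X) :
    gromovProd p x w ≤ gromovProd p x z + δ ∨ gromovProd p w z ≤ gromovProd p x z + δ := by
  simp only [gromovProd]
  rcases hX.dist_add_dist_le_or x z w p with h | h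
  · left
    linarith [dist_comm z p, dist_comm w p]
  · right
    linarith [dist_comm x p, dist_comm z w, dist_comm w p]

theorem gromovProd_le_add (hX : IsDeltaHyperbolic X δ) {p x w z : X} {c : ℝ}
    (hxz : gromovProd p x z ≤ c) (hxw : c + δ < gromovProd p x w) :
    gromovProd p w z ≤ c + δ :=
  ((hX.gromovProd_le_or p x w z).resolve_left (by linarith)).trans (by linarith)

theorem gromovProd_le_add_of_mem_pair (hX : IsDeltaHyperbolic X δ) {p x x' a z : X} {c : ℝ}
    (ha : a ∈ ({x, x'} : Set X)) (haz : gromovProd p a z ≤ c)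
    (hxx' : c + δ < gromovProd p x x') {b : X} (hb : b ∈ ({x, x'} : Set X)) :
    gromovProd p b z ≤ c + δ := by
  have hδ := hX.nonneg p
  rcases ha with rfl | rfl <;> rcases hb with rfl | rfl
  · linarith
  · exact hX.gromovProd_le_add haz hxx'
  · exact hX.gromovProd_le_add haz (by rwa [gromovProd_comm])
  · linarith

theorem gromovProd_le_add_of_mem_pairs (hX : IsDeltaHyperbolic X δ) {p x x' z z' a a' : X} {c : ℝ}
    (ha : a ∈ ({x, x'} : Set X)) (ha' : a' ∈ ({z, z'} : Set X)) (haa' : gromovProd p a a' ≤ c)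
    (hx : c + δ < gromovProd p x x') (hz : c + 2 * δ < gromovProd p z z') {b b' : X}
    (hb : b ∈ ({x, x'} : Set X)) (hb' : b' ∈ ({z, z'} : Set X)) :
    gromovProd p b b' ≤ c + 2 * δ := by
  have hba' := hX.gromovProd_le_add_of_mem_pair ha haa' hx hb
  rw [gromovProd_comm] at hba' ⊢
  linarith [hX.gromovProd_le_add_of_mem_pair ha' hba' (by linarith) hb']

theorem gromovProd_inv_apply_inv_mul_le (hX : IsDeltaHyperbolic X δ) {g h : X ≃ᵢ X} {p : X} {c : ℝ}
    (hc : gromovProd p (g⁻¹ p) (h⁻¹ p) ≤ c)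
    (hg : c + δ < dist p (g p) - gromovProd p (g p) (h p))
    (hh : c + 2 * δ < dist p (h p) - gromovProd p (g p) (h p)) :
    gromovProd p ((g⁻¹ * h)⁻¹ p) ((g⁻¹ * h) p) ≤ c + 2 * δ := by
  have hg' : gromovProd p (g⁻¹ p) ((g⁻¹ * h) p) = dist p (g p) - gromovProd p (g p) (h p) := by
    simpa only [inv_inv, dist_inv_apply, IsometryEquiv.mul_apply]
      using gromovProd_apply_apply g⁻¹ p (h p)
  have hh' : gromovProd p (h⁻¹ p) ((g⁻¹ * h)⁻¹ p) = dist p (h p) - gromovProd p (g p) (h p) := by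
    rw [mul_inv_rev, inv_inv, gromovProd_comm p (g p)]
    simpa only [inv_inv, dist_inv_apply, IsometryEquiv.mul_apply]
      using gromovProd_apply_apply h⁻¹ p (g p)
  have huh : gromovProd p (h⁻¹ p) ((g⁻¹ * h) p) ≤ c + δ := by
    rw [gromovProd_comm]
    exact hX.gromovProd_le_add hc (by rwa [hg'])
  linarith [hX.gromovProd_le_add huh (by rw [hh']; linarith)]

end IsDeltaHyperbolic

end GromovProduct

section NearMinimum

open scoped Pointwise

variable {X : Type*} [MetricSpace X] {δ : ℝ} {σ : X → X → ℝ → X}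

theorem exists_forall_dist_apply_le_forall_exists_lt [Nonempty X] {T : Set (X ≃ᵢ X)}
    (hT : T.Nonempty) (hfin : T.Finite) {η : ℝ} (hη : 0 < η) :
    ∃ (y : X) (m : ℝ), (∀ t ∈ T, dist y (t y) ≤ m) ∧ ∀ z, ∃ t ∈ T, m - η < dist z (t z) := by
  obtain ⟨x⟩ := ‹Nonempty X›
  obtain ⟨t₀, ht₀⟩ := hT
  set A : Set ℝ := {r | ∃ y, ∀ t ∈ T, dist y (t y) ≤ r}
  have hbdd : BddBelow A := ⟨0, fun r ⟨y, hy⟩ => dist_nonneg.trans (hy t₀ ht₀)⟩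
  obtain ⟨C, hC⟩ := (hfin.image fun t : X ≃ᵢ X => dist x (t x)).bddAbove
  have hne : A.Nonempty := ⟨C, x, fun t ht => hC (Set.mem_image_of_mem _ ht)⟩
  obtain ⟨m, ⟨y, hy⟩, hm⟩ := Real.lt_sInf_add_pos hne hη
  refine ⟨y, m, hy, fun z => ?_⟩
  by_contra! hle
  linarith [csInf_le hbdd (show m - η ∈ A from ⟨z, hle⟩)]

theorem IsGCB.exists_dist_eq_sub (hσ : IsGCB σ) (y x : X) {r : ℝ} (hr : 0 ≤ r)
    (hrx : r ≤ dist y x) : ∃ z, dist y z = r ∧ dist z x = dist y x - r := by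
  have hmul : r / dist y x * dist y x = r :=
    div_mul_cancel_of_imp fun h => le_antisymm (hrx.trans h.le) hr
  have ht : r / dist y x ∈ Set.Icc (0 : ℝ) 1 := ⟨by positivity, div_le_one_of_le₀ hrx dist_nonneg⟩
  refine ⟨σ y x (r / dist y x), ?_, ?_⟩
  · rw [hσ.dist_left _ _ ht, hmul]
  · rw [hσ.dist_right _ _ ht, sub_mul, hmul, one_mul]

theorem IsDeltaHyperbolic.dist_apply_le_of_dist_le_sub (hX : IsDeltaHyperbolic X δ) {t : X ≃ᵢ X}
    {y z : X} {r : ℝ} (hyz : dist y z ≤ dist y (t y) - r) (hz : dist z (t y) ≤ dist y (t y) - r)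
    (hz' : dist z (t⁻¹ y) ≤ dist y (t y) - r) :
    dist z (t z) ≤ dist y (t y) - 2 * r + 2 * δ := by
  have hcross : dist (t z) y = dist z (t⁻¹ y) := by
    rw [← t.dist_eq z, IsometryEquiv.apply_inv_self]
  rcases hX.dist_add_dist_le_or z (t z) y (t y) with h | h
  · rw [t.dist_eq, dist_comm z y] at h
    linarith
  · linarith

/- Otherwise all long displacements start in the same direction, and moving `y` in that direction
by `4 * δ` would shorten all of them. -/
theorem exists_gromovProd_lt_of_near_min (hσ : IsGCB σ)
    (hX : IsDeltaHyperbolic X δ) (hδ : 0 < δ) {T : Set (X ≃ᵢ X)} (hinv : ∀ t ∈ T, t⁻¹ ∈ T)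
    {y : X} {m : ℝ} (hm : 20 * δ ≤ m) (hy : ∀ t ∈ T, dist y (t y) ≤ m)
    (hmin : ∀ z, ∃ t ∈ T, m - 2 * δ < dist z (t z)) :
    ∃ t ∈ T, ∃ t' ∈ T, m - 10 * δ < dist y (t y) ∧ m - 10 * δ < dist y (t' y) ∧
      gromovProd y (t y) (t' y) < 4 * δ := by
  by_contra! hsame
  obtain ⟨t₀, ht₀, hlong₀⟩ := hmin y
  obtain ⟨z, hyz, hzt₀⟩ := hσ.exists_dist_eq_sub y (t₀ y) (r := 4 * δ) (by linarith) (by linarith)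
  have hcloser (s) (hs : s ∈ T) (hlong : m - 10 * δ < dist y (s y)) :
      dist z (s y) ≤ dist y (s y) - 2 * δ := by
    have hst₀ := hsame s hs t₀ ht₀ hlong (by linarith)
    have ht₀z : gromovProd y (t₀ y) z = 4 * δ := by
      rw [gromovProd, dist_comm (t₀ y) z, hyz, hzt₀]
      ring
    have hsz : 3 * δ ≤ gromovProd y (s y) z := by
      rcases hX.gromovProd_le_or y (s y) (t₀ y) z with h | h <;> linarith
    rw [gromovProd, hyz, dist_comm (s y) z] at hsz
    linarith
  obtain ⟨t, ht, hlong⟩ := hmin z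
  have hlong' : m - 10 * δ < dist y (t y) := by
    have := dist_triangle4 z y (t y) (t z)
    rw [t.dist_eq, dist_comm z y, hyz] at this
    linarith
  have hcloser' := hcloser t⁻¹ (hinv t ht) (by rwa [dist_inv_apply])
  rw [dist_inv_apply] at hcloser'
  have := hX.dist_apply_le_of_dist_le_sub (by linarith) (hcloser t ht hlong') hcloser'
  linarith [hy t ht]

theorem exists_dist_add_le_dist_sq_of_near_min (hσ : IsGCB σ)
    (hX : IsDeltaHyperbolic X δ) (hδ : 0 < δ) {T : Set (X ≃ᵢ X)} (hinv : ∀ t ∈ T, t⁻¹ ∈ T)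
    {y : X} {m : ℝ} (hm : 2100 * δ ≤ m) (hy : ∀ t ∈ T, dist y (t y) ≤ m)
    (hmin : ∀ z, ∃ t ∈ T, m - 2 * δ < dist z (t z)) :
    ∃ u : X ≃ᵢ X, (u ∈ T ∨ u ∈ T * T) ∧ dist y (u y) + 2003 * δ ≤ dist y ((u ^ 2) y) := by
  obtain ⟨t, ht, t', ht', hlong, hlong', hprod⟩ :=
    exists_gromovProd_lt_of_near_min hσ hX hδ hinv (by linarith) hy hmin
  by_cases hback : gromovProd y (t⁻¹ y) (t y) ≤ 6 * δ
  · refine ⟨t, Or.inl ht, ?_⟩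
    rw [gromovProd_inv_apply] at hback
    linarith
  by_cases hback' : gromovProd y (t'⁻¹ y) (t' y) ≤ 6 * δ
  · refine ⟨t', Or.inl ht', ?_⟩
    rw [gromovProd_inv_apply] at hback'
    linarith
  refine ⟨t⁻¹ * t', Or.inr (Set.mul_mem_mul (hinv t ht) ht'), ?_⟩
  have hinvprod : gromovProd y (t⁻¹ y) (t'⁻¹ y) ≤ 6 * δ := by
    have := hX.gromovProd_le_add_of_mem_pairs (x := t⁻¹ y) (x' := t y) (z := t'⁻¹ y) (z' := t' y)
      (b := t⁻¹ y) (b' := t'⁻¹ y) (by simp) (by simp) hprod.le (by linarith) (by linarith)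
      (by simp) (by simp)
    linarith
  have hu := hX.gromovProd_inv_apply_inv_mul_le hinvprod (by linarith) (by linarith)
  have hlong_u : dist y ((t⁻¹ * t') y) =
      dist y (t y) + dist y (t' y) - 2 * gromovProd y (t y) (t' y) := by
    rw [IsometryEquiv.mul_apply, dist_comm, dist_inv_apply_left, gromovProd, dist_comm (t' y)]
    ring
  rw [gromovProd_inv_apply] at hu
  linarith

end NearMinimum

section StableLength

/-- `l` is the stable (or asymptotic) translation length `lim d(z, g ^ n z) / n` of `g`; the limit
does not depend on `z`. -/
def HasStableLength {X : Type*} [MetricSpace X] (g : X ≃ᵢ X) (l : ℝ) : Prop :=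
  ∀ z : X, Tendsto (fun n : ℕ => dist z ((g ^ n) z) / n) atTop (nhds l)

variable {X : Type*} [MetricSpace X] {δ : ℝ} {g : X ≃ᵢ X} {l : ℝ}

theorem subadditive_dist_pow_apply (g : X ≃ᵢ X) (z : X) :
    Subadditive fun n : ℕ => dist z ((g ^ n) z) := fun m n => by
  simpa only [pow_add] using dist_mul_apply_le (g ^ m) (g ^ n) z

theorem bddBelow_range_dist_pow_apply_div (g : X ≃ᵢ X) (z : X) :
    BddBelow (Set.range fun n : ℕ => dist z ((g ^ n) z) / n) :=
  ⟨0, by rintro _ ⟨n, rfl⟩; positivity⟩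

theorem pow_apply_pow_apply (g : X ≃ᵢ X) (z : X) (m n : ℕ) :
    (g ^ n) ((g ^ m) z) = (g ^ (m + n)) z := by
  rw [← IsometryEquiv.mul_apply, ← pow_add, add_comm]

theorem dist_pow_apply_pow_add_apply (g : X ≃ᵢ X) (z : X) (m n : ℕ) :
    dist ((g ^ m) z) ((g ^ (m + n)) z) = dist z ((g ^ n) z) := by
  rw [pow_add, IsometryEquiv.mul_apply, (g ^ m).dist_eq]

theorem dist_apply_pow_succ_apply (g : X ≃ᵢ X) (z : X) (n : ℕ) :
    dist (g z) ((g ^ (n + 1)) z) = dist z ((g ^ n) z) := by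
  rw [pow_succ', IsometryEquiv.mul_apply, g.dist_eq]

theorem dist_sq_apply_apply (g : X ≃ᵢ X) (z : X) : dist ((g ^ 2) z) (g z) = dist z (g z) := by
  rw [dist_comm, dist_apply_pow_succ_apply g z 1, pow_one]

theorem exists_hasStableLength [Nonempty X] (g : X ≃ᵢ X) : ∃ l, HasStableLength g l := by
  obtain ⟨x⟩ := ‹Nonempty X›
  refine ⟨(subadditive_dist_pow_apply g x).lim, fun z => ?_⟩
  refine tendsto_of_tendsto_of_dist ((subadditive_dist_pow_apply g x).tendsto_lim
    (bddBelow_range_dist_pow_apply_div g x)) (squeeze_zero (fun _ => dist_nonneg) (fun n => ?_)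
    (tendsto_const_div_atTop_nhds_zero_nat (2 * dist x z)))
  rw [Real.dist_eq, ← sub_div, abs_div, Nat.abs_cast]
  gcongr
  have := dist_dist_dist_le x ((g ^ n) x) z ((g ^ n) z)
  rwa [(g ^ n).dist_eq, ← two_mul] at this

theorem tendsto_add_mul_div_natCast (C r : ℝ) :
    Tendsto (fun n : ℕ => (C + n * r) / n) atTop (nhds r) := by
  have h : Tendsto (fun n : ℕ => C / n + r) atTop (nhds (0 + r)) :=
    (tendsto_const_div_atTop_nhds_zero_nat C).add_const r
  rw [zero_add] at h
  refine h.congr' ?_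
  filter_upwards [eventually_ne_atTop 0] with n hn
  have : (n : ℝ) ≠ 0 := Nat.cast_ne_zero.2 hn
  field_simp

namespace IsDeltaHyperbolic

theorem dist_sq_add_dist_pow_le_or (hX : IsDeltaHyperbolic X δ) (g : X ≃ᵢ X) (y : X) (n : ℕ) :
    dist y ((g ^ 2) y) + dist y ((g ^ (n + 1)) y) ≤
        dist y (g y) + dist y ((g ^ n) y) + 2 * δ ∨
      dist y ((g ^ 2) y) + dist y ((g ^ (n + 1)) y) ≤
        dist y ((g ^ (n + 2)) y) + dist y (g y) + 2 * δ := by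
  have h := hX.dist_add_dist_le_or y ((g ^ 2) y) (g y) ((g ^ (n + 2)) y)
  rw [dist_apply_pow_succ_apply, dist_sq_apply_apply] at h
  rw [add_comm n 2] at h ⊢
  rwa [dist_pow_apply_pow_add_apply] at h

theorem dist_pow_add_dist_le_or (hX : IsDeltaHyperbolic X δ) (g : X ≃ᵢ X) (y : X) (n : ℕ) :
    dist y ((g ^ (n + 2)) y) + dist y (g y) ≤
        dist y ((g ^ 2) y) + dist y ((g ^ (n + 1)) y) + 2 * δ ∨
      dist y ((g ^ (n + 2)) y) + dist y (g y) ≤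
        dist y (g y) + dist y ((g ^ n) y) + 2 * δ := by
  have h := hX.dist_add_dist_le_or y ((g ^ (n + 2)) y) ((g ^ 2) y) (g y)
  rw [dist_sq_apply_apply, dist_comm ((g ^ (n + 2)) y) (g y), dist_apply_pow_succ_apply,
    dist_comm ((g ^ (n + 2)) y)] at h
  rw [add_comm n 2] at h ⊢
  rwa [dist_pow_apply_pow_add_apply] at h

end IsDeltaHyperbolic

namespace HasStableLength

theorem nonneg (hl : HasStableLength g l) (z : X) : 0 ≤ l :=
  ge_of_tendsto' (hl z) fun _ => by positivity

theorem mul_le (hl : HasStableLength g l) (z : X) (n : ℕ) : n * l ≤ dist z ((g ^ n) z) := by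
  rcases Nat.eq_zero_or_pos n with rfl | hn
  · simp
  have hbdd := bddBelow_range_dist_pow_apply_div g z
  have hlim : (subadditive_dist_pow_apply g z).lim = l :=
    tendsto_nhds_unique ((subadditive_dist_pow_apply g z).tendsto_lim hbdd) (hl z)
  have hle := (subadditive_dist_pow_apply g z).lim_le_div hbdd hn.ne'
  rwa [hlim, le_div_iff₀' (by exact_mod_cast hn)] at hle

theorem le_dist_apply (hl : HasStableLength g l) (z : X) : l ≤ dist z (g z) := by
  simpa using hl.mul_le z 1

theorem le_of_forall_le (hl : HasStableLength g l) (z : X) {C r : ℝ}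
    (h : ∀ n : ℕ, dist z ((g ^ n) z) ≤ C + n * r) : l ≤ r :=
  le_of_tendsto_of_tendsto' (hl z) (tendsto_add_mul_div_natCast C r) fun n => by
    gcongr
    exact h n

theorem le_of_le_forall (hl : HasStableLength g l) (z : X) {C r : ℝ}
    (h : ∀ n : ℕ, C + n * r ≤ dist z ((g ^ n) z)) : r ≤ l :=
  le_of_tendsto_of_tendsto' (tendsto_add_mul_div_natCast C r) (hl z) fun n => by
    gcongr
    exact h n

theorem inv (hl : HasStableLength g l) : HasStableLength g⁻¹ l := fun z => by
  simpa only [inv_pow, dist_inv_apply] using hl z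

theorem conj (hl : HasStableLength g l) (s : X ≃ᵢ X) : HasStableLength (s * g * s⁻¹) l := by
  intro z
  refine (hl (s⁻¹ z)).congr fun n => ?_
  rw [conj_pow, ← dist_conj_apply, inv_inv]

theorem pow (hl : HasStableLength g l) {k : ℕ} (hk : k ≠ 0) : HasStableLength (g ^ k) (k * l) := by
  intro z
  have hk' : (k : ℝ) ≠ 0 := Nat.cast_ne_zero.2 hk
  refine (((hl z).comp (tendsto_id.const_mul_atTop' (Nat.pos_of_ne_zero hk))).const_mul
    (k : ℝ)).congr fun n => ?_
  simp only [Function.comp, id, Nat.cast_mul, ← pow_mul]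
  rw [mul_div_assoc', mul_div_mul_left _ _ hk']

theorem sub_le (hl : HasStableLength g l) (hX : IsDeltaHyperbolic X δ) {B : ℝ} {y : X}
    (hB : 2 * δ < B) (h : dist y (g y) + B ≤ dist y ((g ^ 2) y)) : B - 2 * δ ≤ l := by
  have hgrowth (n : ℕ) :
      dist y ((g ^ (n + 1)) y) + (B - 2 * δ) ≤ dist y ((g ^ (n + 2)) y) := by
    induction n with
    | zero =>
      rw [zero_add, zero_add, pow_one]
      linarith [hX.nonneg y]
    | succ n ih =>
      rcases hX.dist_sq_add_dist_pow_le_or g y (n + 1) with h' | h' <;> linarith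
  have hlinear (n : ℕ) : n * (B - 2 * δ) ≤ dist y ((g ^ (n + 1)) y) := by
    induction n with
    | zero => simp
    | succ n ih =>
      push_cast
      linarith [hgrowth n]
  refine hl.le_of_le_forall y (C := -(B - 2 * δ)) fun n => ?_
  cases n with
  | zero =>
    simp only [Nat.cast_zero, zero_mul, add_zero, pow_zero, IsometryEquiv.coe_one, id, dist_self]
    linarith
  | succ n =>
    push_cast
    linarith [hlinear n]

theorem dist_sq_le (hl : HasStableLength g l) (hX : IsDeltaHyperbolic X δ) (y : X) :
    dist y ((g ^ 2) y) ≤ dist y (g y) + l + 2 * δ := by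
  by_contra! h
  have := hl.sub_le hX (B := dist y ((g ^ 2) y) - dist y (g y)) (y := y)
    (by linarith [hl.nonneg y]) (by linarith)
  linarith

theorem le_dist_sq (hl : HasStableLength g l) (hX : IsDeltaHyperbolic X δ) (hlδ : δ < l) (y : X) :
    dist y (g y) + l ≤ dist y ((g ^ 2) y) + 2 * δ := by
  set r := max (dist y ((g ^ 2) y) - dist y (g y) + 2 * δ) δ
  have hr : dist y ((g ^ 2) y) - dist y (g y) + 2 * δ ≤ r := le_max_left _ _
  have hr' : δ ≤ r := le_max_right _ _
  have hlinear (n : ℕ) : dist y ((g ^ n) y) ≤ dist y (g y) + n * r ∧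
      dist y ((g ^ (n + 1)) y) ≤ dist y (g y) + (n + 1) * r := by
    induction n with
    | zero =>
      simp only [pow_zero, IsometryEquiv.coe_one, id, dist_self, zero_add, pow_one, Nat.cast_zero,
        zero_mul, one_mul, add_zero]
      exact ⟨dist_nonneg, by linarith [hX.nonneg y]⟩
    | succ n ih =>
      push_cast
      refine ⟨ih.2, ?_⟩
      rcases hX.dist_pow_add_dist_le_or g y n with h | h <;> linarith
  have hlr : l ≤ r := hl.le_of_forall_le y fun n => (hlinear n).1
  rcases le_max_iff.1 hlr with h | h <;> linarith

theorem gromovProd_inv_apply_le (hl : HasStableLength g l) (hX : IsDeltaHyperbolic X δ)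
    (hlδ : δ < l) (y : X) : gromovProd y (g⁻¹ y) (g y) ≤ (dist y (g y) - l + 2 * δ) / 2 := by
  rw [gromovProd_inv_apply]
  linarith [hl.le_dist_sq hX hlδ y]

theorem le_gromovProd_of_mem_pair (hl : HasStableLength g l) (hX : IsDeltaHyperbolic X δ)
    {y a b : X} (ha : a ∈ ({g⁻¹ y, g y} : Set X)) (hb : b ∈ ({g⁻¹ y, g y} : Set X)) :
    (dist y (g y) - l - 2 * δ) / 2 ≤ gromovProd y a b := by
  have hturn : (dist y (g y) - l - 2 * δ) / 2 ≤ gromovProd y (g⁻¹ y) (g y) := by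
    rw [gromovProd_inv_apply]
    linarith [hl.dist_sq_le hX y]
  have hself : (dist y (g y) - l - 2 * δ) / 2 ≤ dist y (g y) := by
    linarith [hl.nonneg y, hX.nonneg y, dist_nonneg (x := y) (y := g y)]
  rcases ha with rfl | rfl <;> rcases hb with rfl | rfl
  · rwa [gromovProd_self, dist_inv_apply]
  · exact hturn
  · rwa [gromovProd_comm]
  · rwa [gromovProd_self]

theorem gromovProd_inv_pow_le (hl : HasStableLength g l) (hX : IsDeltaHyperbolic X δ)
    (hlδ : 4 * δ < l) (y : X) (n : ℕ) :
    gromovProd y (g⁻¹ y) ((g ^ (n + 1)) y) ≤ (dist y (g y) - l + 4 * δ) / 2 := by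
  have hδ := hX.nonneg y
  have hbase := hl.gromovProd_inv_apply_le hX (by linarith) y
  induction n with
  | zero =>
    rw [zero_add, pow_one]
    linarith
  | succ n ih =>
    have hforward := gromovProd_apply_apply g y ((g ^ (n + 1)) y)
    rw [← IsometryEquiv.mul_apply g, ← pow_succ'] at hforward
    rw [gromovProd_comm] at hbase ⊢
    linarith [hX.gromovProd_le_add hbase (w := (g ^ (n + 1 + 1)) y) (by linarith)]

theorem gromovProd_pow_pow_le (hl : HasStableLength g l) (hX : IsDeltaHyperbolic X δ)
    (hlδ : 5 * δ < l) (y : X) (i j : ℕ) :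
    gromovProd y ((g ^ i)⁻¹ y) ((g ^ j) y) ≤ (dist y (g y) - l + 6 * δ) / 2 := by
  have hδ := hX.nonneg y
  have hly := hl.le_dist_apply y
  rcases j with _ | j
  · rw [pow_zero, IsometryEquiv.coe_one, id, gromovProd_self_right]
    linarith
  rcases i with _ | _ | i
  · rw [pow_zero, inv_one, IsometryEquiv.coe_one, id, gromovProd_comm, gromovProd_self_right]
    linarith
  · rw [zero_add, pow_one]
    linarith [hl.gromovProd_inv_pow_le hX (by linarith) y j]
  have hbackward := gromovProd_apply_apply g⁻¹ y ((g⁻¹ ^ (i + 1)) y)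
  rw [← IsometryEquiv.mul_apply g⁻¹, ← pow_succ', dist_inv_apply, inv_pow g (i + 1 + 1)]
    at hbackward
  have hinv := hl.inv.gromovProd_inv_pow_le hX (by linarith) y i
  rw [dist_inv_apply] at hinv
  linarith [hX.gromovProd_le_add (hl.gromovProd_inv_pow_le hX (by linarith) y j)
    (w := (g ^ (i + 1 + 1))⁻¹ y) (by linarith)]

theorem sub_le_gromovProd_pow_succ (hl : HasStableLength g l) (hX : IsDeltaHyperbolic X δ)
    (hlδ : 5 * δ < l) (y : X) (n : ℕ) :
    dist y ((g ^ n) y) - (dist y (g y) - l + 6 * δ) / 2 ≤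
      gromovProd y ((g ^ n) y) ((g ^ (n + 1)) y) := by
  have h := gromovProd_apply_apply (g ^ n) y (g y)
  rw [← IsometryEquiv.mul_apply, ← pow_succ] at h
  have h' := hl.gromovProd_pow_pow_le hX hlδ y n 1
  rw [pow_one] at h'
  linarith

theorem le_dist_pow_add (hl : HasStableLength g l) (hX : IsDeltaHyperbolic X δ)
    (hlδ : 5 * δ < l) (y : X) (i j : ℕ) :
    dist y ((g ^ i) y) + dist y ((g ^ j) y) - (dist y (g y) - l + 6 * δ) ≤
      dist y ((g ^ (i + j)) y) := by
  have h := hl.gromovProd_pow_pow_le hX hlδ y i j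
  rw [gromovProd, dist_inv_apply, dist_inv_apply_left, ← IsometryEquiv.mul_apply, ← pow_add] at h
  linarith

theorem dist_pow_le (hl : HasStableLength g l) (hX : IsDeltaHyperbolic X δ)
    (hlδ : 5 * δ < l) (y : X) (n : ℕ) :
    dist y ((g ^ n) y) ≤ n * l + (dist y (g y) - l + 6 * δ) := by
  set c := dist y (g y) - l + 6 * δ
  rcases Nat.eq_zero_or_pos n with rfl | hn
  · simp only [pow_zero, IsometryEquiv.coe_one, id, dist_self, Nat.cast_zero, zero_mul, zero_add, c]
    linarith [hl.le_dist_apply y, hX.nonneg y]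
  have hlinear (k : ℕ) : c + k * (dist y ((g ^ n) y) - c) ≤ dist y ((g ^ (n * k)) y) + c := by
    induction k with
    | zero => simp
    | succ k ih =>
      rw [Nat.mul_succ]
      push_cast
      linarith [hl.le_dist_pow_add hX hlδ y (n * k) n]
  have := (hl.pow hn.ne').le_of_le_forall y (C := 0) (r := dist y ((g ^ n) y) - c) fun k => by
    rw [← pow_mul]
    linarith [hlinear k]
  linarith

end HasStableLength

end StableLength

section PingPong

/-- A ping-pong configuration for `u` and `v`: a nonempty set mapped into itself by both, with
disjoint images. It certifies that `u` and `v` freely generate a free semigroup. -/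
def IsPingPongPair {X : Type*} [MetricSpace X] (u v : X ≃ᵢ X) : Prop :=
  ∃ Y : Set X, Y.Nonempty ∧ Set.MapsTo u Y Y ∧ Set.MapsTo v Y Y ∧ Disjoint (u '' Y) (v '' Y)

variable {X : Type*} [MetricSpace X] {δ : ℝ}

theorem IsPingPongPair.sq {u v : X ≃ᵢ X} (h : IsPingPongPair u v) :
    IsPingPongPair (u ^ 2) (v ^ 2) := by
  obtain ⟨Y, hne, hu, hv, huv⟩ := h
  simp only [pow_two]
  refine ⟨Y, hne, hu.comp hu, hv.comp hv, huv.mono ?_ ?_⟩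
  · rintro _ ⟨z, hz, rfl⟩
    exact ⟨u z, hu hz, rfl⟩
  · rintro _ ⟨z, hz, rfl⟩
    exact ⟨v z, hv hz, rfl⟩

theorem IsDeltaHyperbolic.gromovProd_apply_le (hX : IsDeltaHyperbolic X δ) {p q z : X}
    {t : X ≃ᵢ X} {a : ℝ} (hqt : gromovProd p q (t p) ≤ a) (hz : gromovProd p (t⁻¹ p) z ≤ a + δ)
    (ht : 2 * (a + δ) < dist p (t p)) : gromovProd p q (t z) ≤ a + δ := by
  have hforward := gromovProd_apply_apply t p z
  rw [gromovProd_comm] at hqt ⊢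
  exact hX.gromovProd_le_add hqt (by linarith)

theorem IsDeltaHyperbolic.isPingPongPair (hX : IsDeltaHyperbolic X δ) {p : X} {g h : X ≃ᵢ X}
    {a L : ℝ} (hgg : gromovProd p (g⁻¹ p) (g p) ≤ a) (hgh : gromovProd p (g⁻¹ p) (h p) ≤ a)
    (hhg : gromovProd p (h⁻¹ p) (g p) ≤ a) (hhh : gromovProd p (h⁻¹ p) (h p) ≤ a)
    (hg : L ≤ dist p (g p)) (hh : L ≤ dist p (h p)) (hL : 2 * (a + δ) < L)
    (hsep : gromovProd p (g p) (h p) < L - a - 2 * δ) : IsPingPongPair g h := by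
  have ha : 0 ≤ a + δ := add_nonneg ((gromovProd_nonneg _ _ _).trans hgg) (hX.nonneg p)
  refine ⟨{z | gromovProd p (g⁻¹ p) z ≤ a + δ ∧ gromovProd p (h⁻¹ p) z ≤ a + δ}, ⟨p, ?_, ?_⟩,
    fun z hz => ⟨?_, ?_⟩, fun z hz => ⟨?_, ?_⟩, Set.disjoint_left.2 ?_⟩
  · rwa [gromovProd_self_right]
  · rwa [gromovProd_self_right]
  · exact hX.gromovProd_apply_le hgg hz.1 (by linarith)
  · exact hX.gromovProd_apply_le hhg hz.1 (by linarith)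
  · exact hX.gromovProd_apply_le hgh hz.2 (by linarith)
  · exact hX.gromovProd_apply_le hhh hz.2 (by linarith)
  · rintro _ ⟨z, hz, rfl⟩ ⟨z', hz', heq⟩
    have hgz := gromovProd_apply_apply g p z
    have hhz' := gromovProd_apply_apply h p z'
    rw [heq, gromovProd_comm] at hhz'
    rcases hX.gromovProd_le_or p (g p) (g z) (h p) with hle | hle <;>
      linarith [hz.1, hz'.2]

theorem IsDeltaHyperbolic.isPingPongPair_or_inv (hX : IsDeltaHyperbolic X δ) {p : X}
    {g h : X ≃ᵢ X} {a L : ℝ} (hgg : gromovProd p (g⁻¹ p) (g p) ≤ a)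
    (hhh : gromovProd p (h⁻¹ p) (h p) ≤ a) (hg : L ≤ dist p (g p)) (hh : L ≤ dist p (h p))
    (hL : 2 * (a + 2 * δ) < L) (hgh : gromovProd p (g p) (h p) < L - a - 3 * δ)
    (hgh' : gromovProd p (g⁻¹ p) (h p) < L - a - 3 * δ) :
    IsPingPongPair g h ∨ IsPingPongPair g⁻¹ h := by
  have hδ := hX.nonneg p
  have pair (h₁ : gromovProd p (g⁻¹ p) (h p) ≤ a + δ) (h₂ : gromovProd p (h⁻¹ p) (g p) ≤ a + δ) :
      IsPingPongPair g h :=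
    hX.isPingPongPair (a := a + δ) (by linarith) h₁ h₂ (by linarith) hg hh (by linarith)
      (by linarith)
  have pair_inv (h₁ : gromovProd p (g p) (h p) ≤ a + δ)
      (h₂ : gromovProd p (h⁻¹ p) (g⁻¹ p) ≤ a + δ) : IsPingPongPair g⁻¹ h :=
    hX.isPingPongPair (a := a + δ) (by rw [inv_inv, gromovProd_comm]; linarith) (by rwa [inv_inv])
      h₂ (by linarith) (by rwa [dist_inv_apply]) hh (by linarith) (by linarith)
  have hgg' : gromovProd p (g p) (g⁻¹ p) ≤ a := by rwa [gromovProd_comm]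
  have hhh' : gromovProd p (h p) (h⁻¹ p) ≤ a := by rwa [gromovProd_comm]
  rcases le_or_gt (gromovProd p (g p) (h p)) (a + δ) with hsame | hsame
  · rcases le_or_gt (gromovProd p (g⁻¹ p) (h p)) (a + δ) with hsame' | hsame'
    · rcases hX.gromovProd_le_or p (g⁻¹ p) (h⁻¹ p) (g p) with hle | hle
      · exact Or.inr (pair_inv hsame (by rw [gromovProd_comm]; linarith))
      · exact Or.inl (pair hsame' (by linarith))
    · refine Or.inr (pair_inv hsame ?_)
      rw [gromovProd_comm] at hsame' ⊢
      exact hX.gromovProd_le_add hhh' hsame'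
  · refine Or.inl (pair ?_ ?_)
    · rw [gromovProd_comm]
      exact hX.gromovProd_le_add hgg' hsame
    · rw [gromovProd_comm] at hsame ⊢
      exact hX.gromovProd_le_add hhh' hsame

/- The two orbits of `y` run along almost geodesic rays. By hyperbolicity these fellow-travel up to
step `n`, and both `n`-th orbit points lie at distance about `n * l` from `y`. -/
theorem IsDeltaHyperbolic.dist_pow_pow_le (hX : IsDeltaHyperbolic X δ) {g h : X ≃ᵢ X} {l : ℝ}
    (hg : HasStableLength g l) (hh : HasStableLength h l) (hl : 5 * δ < l) {y : X}
    (hgy : dist y (g y) ≤ l + 100 * δ) (hhy : dist y (h y) ≤ l + 100 * δ) {n : ℕ}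
    (hn : dist ((h ^ (n + 1)) y) ((g ^ (n + 1)) y) ≤ 2 * l) :
    dist ((h ^ n) y) ((g ^ n) y) ≤ 322 * δ := by
  have hδ := hX.nonneg y
  have hgnext := hg.sub_le_gromovProd_pow_succ hX hl y n
  have hhnext := hh.sub_le_gromovProd_pow_succ hX hl y n
  have hglow := hg.mul_le y n
  have hhlow := hh.mul_le y n
  have hnext : n * l ≤ gromovProd y ((h ^ (n + 1)) y) ((g ^ (n + 1)) y) := by
    have hglow' := hg.mul_le y (n + 1)
    have hhlow' := hh.mul_le y (n + 1)
    push_cast at hglow' hhlow'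
    rw [gromovProd]
    linarith
  have hprod : n * l - 55 * δ ≤ gromovProd y ((h ^ n) y) ((g ^ n) y) := by
    rcases hX.gromovProd_le_or y ((h ^ n) y) ((h ^ (n + 1)) y) ((g ^ n) y) with hle | hle
    · linarith
    · rcases hX.gromovProd_le_or y ((g ^ n) y) ((g ^ (n + 1)) y) ((h ^ (n + 1)) y)
        with hle' | hle'
      · rw [gromovProd_comm y ((g ^ n) y) ((h ^ (n + 1)) y)] at hle'
        linarith
      · rw [gromovProd_comm y ((g ^ n) y), gromovProd_comm y ((g ^ (n + 1)) y)] at hle'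
        linarith
  rw [gromovProd] at hprod
  linarith [hg.dist_pow_le hX hl y n, hh.dist_pow_le hX hl y n]

theorem IsDeltaHyperbolic.isPingPongPair_sq_or_inv (hX : IsDeltaHyperbolic X δ) {g h : X ≃ᵢ X}
    {l : ℝ} (hg : HasStableLength g l) (hh : HasStableLength h l) (hl : 2000 * δ < l) {p : X}
    (hgp : dist p ((g ^ 2) p) ≤ 2 * l + 750 * δ) (hhp : dist p ((h ^ 2) p) ≤ 2 * l + 750 * δ)
    (hgh : 2 * l - 750 * δ ≤ dist ((g ^ 2) p) ((h ^ 2) p))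
    (hgh' : 2 * l - 750 * δ ≤ dist ((g ^ 2)⁻¹ p) ((h ^ 2) p)) :
    IsPingPongPair (g ^ 2) (h ^ 2) ∨ IsPingPongPair (g ^ 2)⁻¹ (h ^ 2) := by
  have hδ := hX.nonneg p
  have hturn {f : X ≃ᵢ X} (hf : HasStableLength f l)
      (hfp : dist p ((f ^ 2) p) ≤ 2 * l + 750 * δ) :
      gromovProd p ((f ^ 2)⁻¹ p) ((f ^ 2) p) ≤ 750 * δ := by
    have hfour := hf.mul_le p (2 * 2)
    push_cast at hfour
    rw [gromovProd_inv_apply, ← pow_mul]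
    linarith
  refine hX.isPingPongPair_or_inv (L := 2 * l) (hturn hg hgp) (hturn hh hhp) (hg.mul_le p 2)
    (hh.mul_le p 2) (by linarith) ?_ ?_
  · rw [gromovProd]
    linarith
  · rw [gromovProd, dist_inv_apply]
    linarith

theorem IsDeltaHyperbolic.isPingPongPair_sq_or_inv_of_far (hX : IsDeltaHyperbolic X δ)
    {g h : X ≃ᵢ X} {l : ℝ} (hg : HasStableLength g l) (hh : HasStableLength h l)
    (hl : 2000 * δ < l) {y : X} (hgy : dist y (g y) ≤ l + 100 * δ)
    (hhy : dist y (h y) ≤ l + 100 * δ) (hgh : 322 * δ < dist (h y) (g y))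
    (hgh' : 322 * δ < dist (h y) (g⁻¹ y)) :
    IsPingPongPair (g ^ 2) (h ^ 2) ∨ IsPingPongPair (g ^ 2)⁻¹ (h ^ 2) := by
  have hδ := hX.nonneg y
  have hfar {f : X ≃ᵢ X} (hf : HasStableLength f l) (hfy : dist y (f y) ≤ l + 100 * δ)
      (hhf : 322 * δ < dist (h y) (f y)) : 2 * l - 750 * δ ≤ dist ((f ^ 2) y) ((h ^ 2) y) := by
    by_contra! hclose
    rw [dist_comm] at hclose
    have := hX.dist_pow_pow_le hf hh (by linarith) hfy hhy (n := 1) (by linarith)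
    simp only [pow_one] at this
    linarith
  have hsq {f : X ≃ᵢ X} (hf : HasStableLength f l) (hfy : dist y (f y) ≤ l + 100 * δ) :
      dist y ((f ^ 2) y) ≤ 2 * l + 750 * δ := by
    have := hf.dist_pow_le hX (by linarith) y 2
    push_cast at this
    linarith
  refine hX.isPingPongPair_sq_or_inv hg hh hl (hsq hg hgy) (hsq hh hhy) (hfar hg hgy hgh) ?_
  rw [← inv_pow]
  exact hfar hg.inv (by rwa [dist_inv_apply]) hgh'

theorem IsDeltaHyperbolic.isPingPongPair_sq_or_inv_of_divergence (hX : IsDeltaHyperbolic X δ)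
    {g h : X ≃ᵢ X} {l : ℝ} (hg : HasStableLength g l) (hh : HasStableLength h l)
    (hl : 2000 * δ < l) {y : X} (hgy : dist y (g y) ≤ l + 100 * δ)
    (hhy : dist y (h y) ≤ l + 100 * δ) {n : ℕ} (hn : dist ((h ^ n) y) ((g ^ n) y) ≤ 322 * δ)
    (hn₁ : dist ((h ^ (n + 1)) y) ((g ^ (n + 1)) y) ≤ 322 * δ)
    (hn₃ : 2 * l < dist ((h ^ (n + 3)) y) ((g ^ (n + 3)) y)) :
    IsPingPongPair (g ^ 2) (h ^ 2) ∨ IsPingPongPair (g ^ 2)⁻¹ (h ^ 2) := by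
  have hδ := hX.nonneg y
  set p := (g ^ (n + 1)) y with hp
  set q := (h ^ (n + 1)) y with hq
  have hgp : (g ^ 2) p = (g ^ (n + 1 + 2)) y := pow_apply_pow_apply g y (n + 1) 2
  have hhq : (h ^ 2) q = (h ^ (n + 1 + 2)) y := pow_apply_pow_apply h y (n + 1) 2
  have hsq {f : X ≃ᵢ X} (hf : HasStableLength f l) (hfy : dist y (f y) ≤ l + 100 * δ) :
      dist ((f ^ (n + 1)) y) ((f ^ (n + 1 + 2)) y) ≤ 2 * l + 106 * δ := by
    rw [dist_pow_apply_pow_add_apply]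
    have := hf.dist_pow_le hX (by linarith) y 2
    push_cast at this
    linarith
  have hpp : dist p ((g ^ 2) p) ≤ 2 * l + 106 * δ := hgp ▸ hsq hg hgy
  have hqq : dist q ((h ^ 2) q) ≤ 2 * l + 106 * δ := hhq ▸ hsq hh hhy
  have hpq : dist ((h ^ 2) q) ((h ^ 2) p) ≤ 322 * δ := by rwa [(h ^ 2).dist_eq]
  refine hX.isPingPongPair_sq_or_inv hg hh hl (p := p) (by linarith) ?_ ?_ ?_
  · have := dist_triangle4 p q ((h ^ 2) q) ((h ^ 2) p)
    rw [dist_comm p q] at this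
    linarith
  · have := dist_triangle_right ((h ^ 2) q) ((g ^ 2) p) ((h ^ 2) p)
    rw [← hgp, ← hhq] at hn₃
    linarith
  · have hback : dist ((g ^ n) y) ((g ^ 2)⁻¹ p) = dist y (g y) := by
      rw [dist_comm, dist_inv_apply_left, pow_apply_pow_apply]
      exact (dist_pow_apply_pow_add_apply g y (n + 1) 1).trans (by rw [pow_one])
    have hforth : 3 * l ≤ dist ((h ^ n) y) ((h ^ 2) q) := by
      rw [hhq, add_assoc, dist_pow_apply_pow_add_apply]
      exact_mod_cast hh.mul_le y 3
    linarith [dist_triangle4 ((h ^ n) y) ((g ^ n) y) ((g ^ 2)⁻¹ p) ((h ^ 2) q),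
      dist_triangle_right ((g ^ 2)⁻¹ p) ((h ^ 2) q) ((h ^ 2) p)]

theorem IsDeltaHyperbolic.isPingPongPair_of_transverse (hX : IsDeltaHyperbolic X δ) (hδ : 0 < δ)
    {g h : X ≃ᵢ X} {l : ℝ} (hg : HasStableLength g l) (hh : HasStableLength h l)
    (hl : 2000 * δ < l) {y : X} {m : ℝ} (hm : l + 100 * δ ≤ m)
    (hgm : dist y (g y) ∈ Set.Ioc (m - 10 * δ) m) (hhm : dist y (h y) ∈ Set.Ioc (m - 10 * δ) m)
    {a b : X} (ha : a ∈ ({g⁻¹ y, g y} : Set X)) (hb : b ∈ ({h⁻¹ y, h y} : Set X))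
    (hab : gromovProd y a b ≤ 4 * δ) : IsPingPongPair g h := by
  have hgturn : (dist y (g y) - l - 2 * δ) / 2 ≤ gromovProd y (g⁻¹ y) (g y) :=
    hg.le_gromovProd_of_mem_pair hX (by simp) (by simp)
  have hhturn : (dist y (h y) - l - 2 * δ) / 2 ≤ gromovProd y (h⁻¹ y) (h y) :=
    hh.le_gromovProd_of_mem_pair hX (by simp) (by simp)
  have hcross {c d : X} (hc : c ∈ ({g⁻¹ y, g y} : Set X)) (hd : d ∈ ({h⁻¹ y, h y} : Set X)) :
      gromovProd y c d ≤ 6 * δ := by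
    linarith [hX.gromovProd_le_add_of_mem_pairs ha hb hab (by linarith [hgm.1])
      (by linarith [hhm.1]) hc hd]
  have hgturn' := hg.gromovProd_inv_apply_le hX (by linarith) y
  have hhturn' := hh.gromovProd_inv_apply_le hX (by linarith) y
  refine hX.isPingPongPair (p := y) (a := (m - l + 2 * δ) / 2) (L := m - 10 * δ)
    (by linarith [hgm.2]) ?_ ?_ (by linarith [hhm.2]) hgm.1.le hhm.1.le (by linarith) ?_
  · linarith [hcross (c := g⁻¹ y) (d := h y) (by simp) (by simp)]
  · rw [gromovProd_comm]
    linarith [hcross (c := g y) (d := h⁻¹ y) (by simp) (by simp)]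
  · linarith [hcross (c := g y) (d := h y) (by simp) (by simp)]

theorem isPingPongPair_of_near_min {σ : X → X → ℝ → X} (hσ : IsGCB σ)
    (hX : IsDeltaHyperbolic X δ) (hδ : 0 < δ) {g h : X ≃ᵢ X} {l : ℝ}
    (hg : HasStableLength g l) (hh : HasStableLength h l) (hl : 2000 * δ < l) {y : X} {m : ℝ}
    (hm : l + 100 * δ ≤ m) (hgy : dist y (g y) ≤ m) (hhy : dist y (h y) ≤ m)
    (hmin : ∀ z, m - 2 * δ < dist z (g z) ∨ m - 2 * δ < dist z (h z)) : IsPingPongPair g h := by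
  obtain ⟨t, ht, t', ht', hlong, hlong', hprod⟩ := exists_gromovProd_lt_of_near_min hσ hX hδ
    (T := {g⁻¹, g} ∪ {h⁻¹, h}) (y := y) (m := m) (by simp) (by linarith)
    (by simp [dist_inv_apply, hgy, hhy])
    (fun z => (hmin z).elim (fun hz => ⟨g, by simp, hz⟩) fun hz => ⟨h, by simp, hz⟩)
  have hdist {f s : X ≃ᵢ X} (hs : s ∈ ({f⁻¹, f} : Set (X ≃ᵢ X))) : dist y (s y) = dist y (f y) := by
    rcases hs with rfl | rfl
    exacts [dist_inv_apply _ y, rfl]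
  have hmem {f s : X ≃ᵢ X} (hs : s ∈ ({f⁻¹, f} : Set (X ≃ᵢ X))) :
      s y ∈ ({f⁻¹ y, f y} : Set X) := by
    rcases hs with rfl | rfl <;> simp
  rcases ht with ht | ht <;> rcases ht' with ht' | ht' <;> rw [hdist ht] at hlong <;>
    rw [hdist ht'] at hlong'
  · linarith [hg.le_gromovProd_of_mem_pair hX (hmem ht) (hmem ht')]
  · exact hX.isPingPongPair_of_transverse hδ hg hh hl hm ⟨hlong, hgy⟩ ⟨hlong', hhy⟩ (hmem ht)
      (hmem ht') hprod.le
  · rw [gromovProd_comm] at hprod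
    exact hX.isPingPongPair_of_transverse hδ hg hh hl hm ⟨hlong', hgy⟩ ⟨hlong, hhy⟩ (hmem ht')
      (hmem ht) hprod.le
  · linarith [hh.le_gromovProd_of_mem_pair hX (hmem ht) (hmem ht')]

theorem IsDiscreteSubgroup.exists_pow_eq_pow {Γ : Subgroup (X ≃ᵢ X)} (hΓ : IsDiscreteSubgroup Γ)
    {g h : X ≃ᵢ X} (hg : g ∈ Γ) (hh : h ∈ Γ) {y : X} {C : ℝ}
    (hC : ∀ n : ℕ, dist ((h ^ n) y) ((g ^ n) y) ≤ C) : ∃ k : ℕ, 0 < k ∧ h ^ k = g ^ k := by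
  have hmaps : Set.MapsTo (fun n : ℕ => (g ^ n)⁻¹ * h ^ n) Set.univ
      {f : X ≃ᵢ X | f ∈ Γ ∧ dist y (f y) ≤ C} := by
    refine fun n _ => ⟨Γ.mul_mem (Γ.inv_mem (Γ.pow_mem hg n)) (Γ.pow_mem hh n), ?_⟩
    rw [IsometryEquiv.mul_apply, dist_comm, dist_inv_apply_left]
    exact hC n
  obtain ⟨m, -, n, -, hmn, heq⟩ := Set.infinite_univ.exists_lt_map_eq_of_mapsTo hmaps (hΓ y C)
  refine ⟨n - m, by omega, ?_⟩
  have hsub (f : X ≃ᵢ X) : f ^ (n - m) = f ^ n * (f ^ m)⁻¹ := pow_sub f hmn.le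
  have heq' : h ^ m = g ^ m * ((g ^ n)⁻¹ * h ^ n) := inv_mul_eq_iff_eq_mul.1 heq
  rw [hsub, hsub, heq']
  group

/- If the `n`-th iterates stay close for all `n`, discreteness gives a common power; otherwise the
orbits first diverge at some step, and a ping-pong takes place there. -/
theorem isPingPongPair_sq_or_inv_or_pow_eq (hX : IsDeltaHyperbolic X δ)
    {Γ : Subgroup (X ≃ᵢ X)} (hΓ : IsDiscreteSubgroup Γ) {g h : X ≃ᵢ X} (hgΓ : g ∈ Γ) (hhΓ : h ∈ Γ)
    {l : ℝ} (hg : HasStableLength g l) (hh : HasStableLength h l) (hl : 2000 * δ < l) {y : X}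
    (hgy : dist y (g y) ≤ l + 100 * δ) (hhy : dist y (h y) ≤ l + 100 * δ)
    (hgh : dist (h y) (g y) ≤ 322 * δ) :
    IsPingPongPair (g ^ 2) (h ^ 2) ∨ IsPingPongPair (g ^ 2)⁻¹ (h ^ 2) ∨
      ∃ k : ℕ, 0 < k ∧ h ^ k = g ^ k := by
  have hδ := hX.nonneg y
  by_contra! hno
  have hclose (n : ℕ) : dist ((h ^ n) y) ((g ^ n) y) ≤ 322 * δ ∧
      dist ((h ^ (n + 1)) y) ((g ^ (n + 1)) y) ≤ 322 * δ := by
    induction n with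
    | zero =>
      simp only [pow_zero, dist_self, zero_add, pow_one]
      exact ⟨by positivity, hgh⟩
    | succ n ih =>
      refine ⟨ih.2, hX.dist_pow_pow_le hg hh (by linarith) hgy hhy ?_⟩
      by_contra! hfar
      exact (hX.isPingPongPair_sq_or_inv_of_divergence hg hh hl hgy hhy ih.1 ih.2 hfar).elim
        hno.1 hno.2.1
  obtain ⟨k, hk, heq⟩ := hΓ.exists_pow_eq_pow hgΓ hhΓ fun n => (hclose n).1
  exact hno.2.2 k hk heq

theorem isPingPongPair_sq_or_inv_or_pow_eq_or_inv {σ : X → X → ℝ → X} (hσ : IsGCB σ)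
    (hX : IsDeltaHyperbolic X δ) (hδ : 0 < δ) [Nonempty X] {Γ : Subgroup (X ≃ᵢ X)}
    (hΓ : IsDiscreteSubgroup Γ) {g h : X ≃ᵢ X} (hgΓ : g ∈ Γ) (hhΓ : h ∈ Γ) {l : ℝ}
    (hg : HasStableLength g l) (hh : HasStableLength h l) (hl : 2000 * δ < l) :
    IsPingPongPair (g ^ 2) (h ^ 2) ∨ IsPingPongPair (g ^ 2)⁻¹ (h ^ 2) ∨
      ∃ k : ℕ, 0 < k ∧ (h ^ k = g ^ k ∨ h ^ k = (g ^ k)⁻¹) := by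
  obtain ⟨y, m, hy, hmin⟩ := exists_forall_dist_apply_le_forall_exists_lt (T := {g, h}) (by simp)
    (by simp) (η := 2 * δ) (by linarith)
  simp only [Set.mem_insert_iff, Set.mem_singleton_iff, forall_eq_or_imp, forall_eq,
    exists_eq_or_imp, exists_eq_left] at hy hmin
  rcases le_total (l + 100 * δ) m with hm | hm
  · exact Or.inl (isPingPongPair_of_near_min hσ hX hδ hg hh hl hm hy.1 hy.2 hmin).sq
  have hgy : dist y (g y) ≤ l + 100 * δ := hy.1.trans hm
  have hgy' : dist y (g⁻¹ y) ≤ l + 100 * δ := by rwa [dist_inv_apply]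
  have hhy : dist y (h y) ≤ l + 100 * δ := hy.2.trans hm
  by_cases hgh : dist (h y) (g y) ≤ 322 * δ
  · rcases isPingPongPair_sq_or_inv_or_pow_eq hX hΓ hgΓ hhΓ hg hh hl hgy hhy hgh with
      hpp | hpp | ⟨k, hk, heq⟩
    exacts [Or.inl hpp, Or.inr (Or.inl hpp), Or.inr (Or.inr ⟨k, hk, Or.inl heq⟩)]
  by_cases hgh' : dist (h y) (g⁻¹ y) ≤ 322 * δ
  · have h := isPingPongPair_sq_or_inv_or_pow_eq hX hΓ (Γ.inv_mem hgΓ) hhΓ hg.inv hh hl hgy' hhy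
      hgh'
    simp only [inv_pow, inv_inv] at h
    rcases h with hpp | hpp | ⟨k, hk, heq⟩
    exacts [Or.inr (Or.inl hpp), Or.inl hpp, Or.inr (Or.inr ⟨k, hk, Or.inr heq⟩)]
  rw [← or_assoc]
  exact Or.inl (hX.isPingPongPair_sq_or_inv_of_far hg hh hl hgy hhy (not_le.1 hgh) (not_le.1 hgh'))

end PingPong

section Lineal

variable {X : Type*} [MetricSpace X] {δ : ℝ}

theorem HasStableLength.gromovProd_pow_le_of_near_min {f : X ≃ᵢ X} {l : ℝ}
    (hf : HasStableLength f l) (hX : IsDeltaHyperbolic X δ) (hl : 10 * δ < l) {p z : X}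
    (hz : dist p z ≤ dist z (f p) + δ) (n : ℕ) :
    gromovProd p z ((f ^ (n + 1)) p) ≤ (dist p (f p) + 3 * δ) / 2 := by
  have hδ := hX.nonneg p
  have hstep : gromovProd p z (f p) ≤ (dist p (f p) + δ) / 2 := by
    rw [gromovProd]
    linarith
  have hturn := hf.gromovProd_pow_pow_le hX (by linarith) p 1 n
  have hforward := gromovProd_apply_apply f p ((f ^ n) p)
  rw [← IsometryEquiv.mul_apply f, ← pow_succ'] at hforward
  rw [pow_one] at hturn
  rcases hX.gromovProd_le_or p z ((f ^ (n + 1)) p) (f p) with hle | hle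
  · linarith
  · rw [gromovProd_comm] at hle
    linarith

/- For large `n`, the points `z` and `(G ^ n) z` project near the endpoints of the long almost
geodesic from `p` to `(G ^ n) p`, so that their distance exceeds `d(p, (G ^ n) p)` by about
`2 * d(p, z)`. -/
theorem HasStableLength.dist_le_of_near_min {G : X ≃ᵢ X} {l : ℝ} (hG : HasStableLength G l)
    (hX : IsDeltaHyperbolic X δ) (hl : 10 * δ < l) {p z : X}
    (hz : dist p z ≤ dist z (G p) + δ) (hz' : dist p z ≤ dist z (G⁻¹ p) + δ)
    (hpz : ∀ n : ℕ, dist z ((G ^ n) z) = dist p ((G ^ n) p)) :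
    dist p z ≤ dist p (G p) + 4 * δ := by
  have hδ := hX.nonneg p
  obtain ⟨n, hn⟩ := exists_nat_gt ((dist p (G p) + 4 * δ) / l)
  rw [div_lt_iff₀ (by linarith)] at hn
  have hlong := hG.mul_le p (n + 1)
  push_cast at hlong
  have hforth := hG.gromovProd_pow_le_of_near_min hX hl hz n
  have hback := hG.inv.gromovProd_pow_le_of_near_min hX hl hz' n
  rw [inv_pow, gromovProd_comm, gromovProd, dist_inv_apply, dist_inv_apply,
    dist_inv_apply_left] at hback
  rw [gromovProd] at hforth
  rcases hX.dist_add_dist_le_or z ((G ^ (n + 1)) p) p ((G ^ (n + 1)) z) with h | h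
  · rw [(G ^ (n + 1)).dist_eq, dist_comm z p] at h
    linarith
  · rw [hpz, dist_comm ((G ^ (n + 1)) p) p] at h
    linarith

theorem exists_forall_dist_le_dist_add {ι : Type*} [Nonempty ι] (f : ι → X) (z : X) {η : ℝ}
    (hη : 0 < η) : ∃ j, ∀ i, dist (f j) z ≤ dist z (f i) + η := by
  obtain ⟨j, hj⟩ := exists_lt_of_ciInf_lt (lt_add_of_pos_right (⨅ i, dist (f i) z) hη)
  refine ⟨j, fun i => hj.le.trans ?_⟩
  rw [dist_comm z]
  gcongr
  exact ciInf_le ⟨0, by rintro _ ⟨i, rfl⟩; exact dist_nonneg⟩ i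

theorem dist_zpow_apply_apply_zpow_apply (g : X ≃ᵢ X) (j : ℤ) (n : ℕ) (y : X) :
    dist ((g ^ j) y) ((g ^ n) ((g ^ j) y)) = dist y ((g ^ n) y) := by
  rw [← dist_conj_apply, ← zpow_natCast, mul_assoc, zpow_mul_comm, inv_mul_cancel_left]

theorem HasStableLength.exists_dist_zpow_le {G w : X ≃ᵢ X} {l : ℝ} (hG : HasStableLength G l)
    (hX : IsDeltaHyperbolic X δ) (hδ : 0 < δ) (hl : 10 * δ < l)
    (hw : w⁻¹ * G * w = G ∨ w⁻¹ * G * w = G⁻¹) (y : X) :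
    ∃ j : ℤ, dist ((G ^ j) y) (w y) ≤ dist y (G y) + 4 * δ := by
  obtain ⟨j, hj⟩ := exists_forall_dist_le_dist_add (fun i : ℤ => (G ^ i) y) (w y) hδ
  have hstep : dist ((G ^ j) y) (G ((G ^ j) y)) = dist y (G y) := by
    simpa only [pow_one] using dist_zpow_apply_apply_zpow_apply G j 1 y
  refine ⟨j, hstep ▸ hG.dist_le_of_near_min hX hl ?_ ?_ fun n => ?_⟩
  · simpa only [zpow_one_add, IsometryEquiv.mul_apply] using hj (1 + j)
  · simpa only [zpow_add, zpow_neg_one, IsometryEquiv.mul_apply] using hj (-1 + j)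
  · have hconj : w⁻¹ * G ^ n * w = (w⁻¹ * G * w) ^ n := by
      simpa only [inv_inv] using (conj_pow (a := w⁻¹) (b := G) (i := n)).symm
    rw [dist_zpow_apply_apply_zpow_apply, ← dist_conj_apply, hconj]
    rcases hw with h | h
    · rw [h]
    · rw [h, inv_pow, dist_inv_apply]

theorem conj_eq_or_eq_inv_of_mem_closure {G : Type*} [Group G] {S : Set G} {a : G}
    (hS : ∀ s ∈ S, s * a * s⁻¹ = a ∨ s * a * s⁻¹ = a⁻¹) {w : G} (hw : w ∈ Subgroup.closure S) :
    w * a * w⁻¹ = a ∨ w * a * w⁻¹ = a⁻¹ := by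
  simp only [← MulAut.conj_apply] at hS ⊢
  induction hw using Subgroup.closure_induction with
  | mem s hs => exact hS s hs
  | one => simp
  | mul b c _ _ hb hc =>
    rw [map_mul, MulAut.mul_apply]
    rcases hc with hc | hc
    · rwa [hc]
    · rw [hc, map_inv, inv_inj, inv_eq_iff_eq_inv]
      exact hb.symm
  | inv b _ hb =>
    simp only [map_inv, MulAut.inv_apply, MulEquiv.symm_apply_eq]
    rcases hb with hb | hb <;> simp [hb]

theorem isVirtuallyNilpotent_zpowers {G : Type*} [Group G] (g : G) :
    IsVirtuallyNilpotent (Subgroup.zpowers g) :=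
  have : Group.IsNilpotent (Subgroup.zpowers g) :=
    @CommGroup.isNilpotent (Subgroup.zpowers g) IsMulCommutative.instCommGroup
  ⟨⊤, inferInstance, inferInstance⟩

theorem isVirtuallyNilpotent_closure_of_conj_eq_or_eq_inv [Nonempty X]
    (hX : IsDeltaHyperbolic X δ) (hδ : 0 < δ) {Γ : Subgroup (X ≃ᵢ X)} (hΓ : IsDiscreteSubgroup Γ)
    {G : X ≃ᵢ X} (hGΓ : G ∈ Γ) {l : ℝ} (hG : HasStableLength G l) (hl : 10 * δ < l)
    {S : Set (X ≃ᵢ X)} (hS : S ⊆ Γ) (hconj : ∀ s ∈ S, s * G * s⁻¹ = G ∨ s * G * s⁻¹ = G⁻¹) :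
    IsVirtuallyNilpotent (Subgroup.closure S) := by
  obtain ⟨y⟩ := ‹Nonempty X›
  refine (isVirtuallyNilpotent_zpowers G).of_relIndex_ne_zero (relIndex_ne_zero_of_finite_cover
    (hΓ y (dist y (G y) + 4 * δ)) fun w hw => ?_)
  obtain ⟨j, hj⟩ := hG.exists_dist_zpow_le hX hδ hl (w := w⁻¹)
    (by simpa only [inv_inv] using conj_eq_or_eq_inv_of_mem_closure hconj hw) y
  refine ⟨w * G ^ j, ⟨Γ.mul_mem ((Subgroup.closure_le _).2 hS hw) (Γ.zpow_mem hGΓ j), ?_⟩, ?_⟩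
  · rwa [IsometryEquiv.mul_apply, dist_comm, ← (w⁻¹).dist_eq, IsometryEquiv.inv_apply_self]
  · rw [mul_inv_rev, inv_mul_cancel_right]
    exact Subgroup.inv_mem _ (Subgroup.zpow_mem_zpowers G j)

theorem isVirtuallyNilpotent_closure_of_conj_pow_eq_or_eq_inv [Nonempty X]
    (hX : IsDeltaHyperbolic X δ) (hδ : 0 < δ) {Γ : Subgroup (X ≃ᵢ X)} (hΓ : IsDiscreteSubgroup Γ)
    {g : X ≃ᵢ X} (hgΓ : g ∈ Γ) {l : ℝ} (hg : HasStableLength g l) (hl : 10 * δ < l)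
    {S : Set (X ≃ᵢ X)} (hS : S ⊆ Γ) (hfin : S.Finite)
    (hconj : ∀ s ∈ S, ∃ k : ℕ, 0 < k ∧
      (s * g ^ k * s⁻¹ = g ^ k ∨ s * g ^ k * s⁻¹ = (g ^ k)⁻¹)) :
    IsVirtuallyNilpotent (Subgroup.closure S) := by
  choose! k hk_pos hk using hconj
  set K : ℕ := ∏ s ∈ hfin.toFinset, k s
  have hK : 1 ≤ K := Finset.prod_pos fun s hs => hk_pos s (hfin.mem_toFinset.1 hs)
  have hK' : (1 : ℝ) ≤ K := by exact_mod_cast hK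
  refine isVirtuallyNilpotent_closure_of_conj_eq_or_eq_inv hX hδ hΓ (Γ.pow_mem hgΓ K)
    (hg.pow (by omega)) (by nlinarith) hS fun s hs => ?_
  obtain ⟨c, hc⟩ : k s ∣ K := Finset.dvd_prod_of_mem k (hfin.mem_toFinset.2 hs)
  rw [hc, pow_mul, ← conj_pow, ← inv_pow]
  exact (hk s hs).imp (congrArg (· ^ c)) (congrArg (· ^ c))

end Lineal

section TitsAlternative

open scoped Pointwise

variable {X : Type*} [MetricSpace X] {δ : ℝ} {σ : X → X → ℝ → X}

theorem finite_pow_of_finite {G : Type*} [Monoid G] {S : Set G} (hS : S.Finite) (n : ℕ) :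
    (S ^ n).Finite := by
  induction n with
  | zero => rw [pow_zero]; exact Set.finite_one
  | succ n ih => rw [pow_succ]; exact ih.mul hS

theorem exists_hasStableLength_gt [Nonempty X] (hσ : IsGCB σ) (hX : IsDeltaHyperbolic X δ)
    (hδ : 0 < δ) {T : Set (X ≃ᵢ X)} (hfin : T.Finite) (hinv : ∀ t ∈ T, t⁻¹ ∈ T)
    (hT : ∀ y, ∃ t ∈ T, 2100 * δ < dist y (t y)) :
    ∃ (u : X ≃ᵢ X) (l : ℝ), (u ∈ T ∨ u ∈ T * T) ∧ HasStableLength u l ∧ 2000 * δ < l := by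
  have hne : T.Nonempty := (hT (Classical.arbitrary X)).imp fun _ => And.left
  obtain ⟨y, m, hy, hmin⟩ :=
    exists_forall_dist_apply_le_forall_exists_lt hne hfin (η := 2 * δ) (by linarith)
  obtain ⟨t, ht, hlong⟩ := hT y
  obtain ⟨u, huT, hu⟩ := exists_dist_add_le_dist_sq_of_near_min hσ hX hδ hinv
    (hlong.le.trans (hy t ht)) hy hmin
  obtain ⟨l, hl⟩ := exists_hasStableLength u
  refine ⟨u, l, huT, hl, ?_⟩
  linarith [hl.sub_le hX (by linarith) hu]

/- A hyperbolic element `g` of bounded length in `S` either plays ping-pong with one of its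
conjugates by elements of `S`, or has a power normalized, up to inversion, by all of `S`. -/
theorem exists_isVirtuallyNilpotent_or_isPingPongPair (Φ : ℝ → ℝ → ℕ) (hδ : 0 < δ) :
    ∃ N : ℕ, 0 < N ∧ ∀ (X : Type*) [MetricSpace X] [Nonempty X] (σ : X → X → ℝ → X), IsGCB σ →
      IsDeltaHyperbolic X δ → HasNetBound X Φ → ∀ Γ : Subgroup (X ≃ᵢ X),
      (∀ g ∈ Γ, IsSigmaIsometry σ g) → IsDiscreteSubgroup Γ → ∀ S : Set (X ≃ᵢ X), S ⊆ Γ →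
      S.Finite → 1 ∈ S → (∀ g ∈ S, g⁻¹ ∈ S) →
      IsVirtuallyNilpotent (Subgroup.closure S) ∨ ∃ u ∈ S ^ N, ∃ v ∈ S ^ N, IsPingPongPair u v := by
  obtain ⟨M, hM⟩ := exists_isVirtuallyNilpotent_closure Φ (2100 * δ)
  refine ⟨4 * M + 6, by omega, ?_⟩
  intro X _ _ σ hσ hX hΦ Γ hΓσ hΓ S hSΓ hSfin hS₁ hSinv
  refine or_iff_not_imp_right.2 fun hno => ?_
  have hpow_inv {n : ℕ} {w : X ≃ᵢ X} (hw : w ∈ S ^ n) : w⁻¹ ∈ S ^ n := by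
    rw [← Set.mem_inv, ← inv_pow]
    exact Set.pow_subset_pow_left (fun g hg => Set.mem_inv.2 (hSinv g hg)) hw
  by_cases hsmall : ∃ y : X, ∀ g ∈ S ^ (M + 1), dist y (g y) ≤ 2100 * δ
  · obtain ⟨y, hy⟩ := hsmall
    exact hM X σ hσ hΦ Γ hΓσ hΓ y S hSΓ hS₁ hSinv hy
  push Not at hsmall
  obtain ⟨g, l, hg, hgl, hl⟩ :=
    exists_hasStableLength_gt hσ hX hδ (finite_pow_of_finite hSfin (M + 1)) (fun _ => hpow_inv)
      hsmall
  have hgS : g ∈ S ^ (2 * M + 2) := hg.elim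
    (fun h => Set.pow_subset_pow_right hS₁ (by omega) h)
    fun h => by rwa [← pow_add, show M + 1 + (M + 1) = 2 * M + 2 by ring] at h
  have hgΓ : g ∈ Γ := Subgroup.pow_subset hSΓ hgS
  refine isVirtuallyNilpotent_closure_of_conj_pow_eq_or_eq_inv hX hδ hΓ hgΓ hgl (by linarith) hSΓ
    hSfin fun s hs => ?_
  have hsq : g ^ 2 ∈ S ^ (4 * M + 4) := by
    rw [show 4 * M + 4 = (2 * M + 2) * 2 by ring, pow_mul]
    exact Set.pow_mem_pow hgS
  have hsq' : g ^ 2 ∈ S ^ (4 * M + 6) := Set.pow_subset_pow_right hS₁ (by omega) hsq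
  have hconj : (s * g * s⁻¹) ^ 2 ∈ S ^ (4 * M + 6) := by
    rw [conj_pow, show 4 * M + 6 = 4 * M + 4 + 1 + 1 by ring, pow_succ, pow_succ']
    exact Set.mul_mem_mul (Set.mul_mem_mul hs hsq) (hSinv s hs)
  have hsg : s * g * s⁻¹ ∈ Γ := Γ.mul_mem (Γ.mul_mem (hSΓ hs) hgΓ) (Γ.inv_mem (hSΓ hs))
  rcases isPingPongPair_sq_or_inv_or_pow_eq_or_inv hσ hX hδ hΓ hgΓ hsg hgl (hgl.conj s) hl with
    hpp | hpp | ⟨k, hk, heq⟩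
  · exact (hno ⟨_, hsq', _, hconj, hpp⟩).elim
  · exact (hno ⟨_, hpow_inv hsq', _, hconj, hpp⟩).elim
  · exact ⟨k, hk, by rwa [conj_pow] at heq⟩

end TitsAlternative

section OrbitGrowth

open scoped Pointwise

/-- The points of the `Γ`-orbit of `x` at distance at most `R` from `x`. -/
def orbitBall {X : Type*} [MetricSpace X] (Γ : Subgroup (X ≃ᵢ X)) (x : X) (R : ℝ) : Set X :=
  {y : X | ∃ g ∈ Γ, y = g x ∧ dist x y ≤ R}

/-- The entropy of the action of `Γ`, seen from the basepoint `x`. As a real `limsup` it is only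
meaningful when the orbit grows at most exponentially, which packing guarantees. -/
noncomputable def orbitEntropy {X : Type*} [MetricSpace X] (Γ : Subgroup (X ≃ᵢ X)) (x : X) : ℝ :=
  limsup (fun R : ℝ => Real.log (orbitBall Γ x R).ncard / R) atTop

variable {X : Type*} [MetricSpace X] {σ : X → X → ℝ → X} {P₀ r₀ : ℝ} {Γ : Subgroup (X ≃ᵢ X)}

theorem orbitBall_finite (hΓ : IsDiscreteSubgroup Γ) (x : X) (R : ℝ) :
    (orbitBall Γ x R).Finite := by
  refine ((hΓ x R).image fun g => g x).subset ?_
  rintro _ ⟨g, hg, rfl, hd⟩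
  exact ⟨g, ⟨hg, hd⟩, rfl⟩

theorem orbitBall_ncard_pos (hΓ : IsDiscreteSubgroup Γ) (x : X) {R : ℝ} (hR : 0 ≤ R) :
    0 < (orbitBall Γ x R).ncard :=
  (Set.ncard_pos (orbitBall_finite hΓ x R)).2 ⟨x, 1, Γ.one_mem, rfl, by rwa [dist_self]⟩

theorem ncard_orbitBall_inter_closedBall_le (hΓ : IsDiscreteSubgroup Γ) {h : X ≃ᵢ X} (hh : h ∈ Γ)
    (x : X) (R s : ℝ) :
    (orbitBall Γ x R ∩ closedBall (h x) s).ncard ≤ (orbitBall Γ x s).ncard := by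
  have hs := orbitBall_finite hΓ x s
  refine (Set.ncard_le_ncard ?_ (hs.image h)).trans (Set.ncard_image_le hs)
  rintro _ ⟨⟨g, hg, rfl, -⟩, hd⟩
  have hcancel : h ((h⁻¹ * g) x) = g x := h.apply_inv_self (g x)
  refine ⟨_, ⟨h⁻¹ * g, Γ.mul_mem (Γ.inv_mem hh) hg, rfl, ?_⟩, hcancel⟩
  rwa [← h.dist_eq, hcancel, dist_comm]

theorem IsPacked.ncard_orbitBall_le (hX : IsPacked X P₀ r₀) (hσ : IsGCB σ) (hr₀ : 0 < r₀)
    (hΓ : IsDiscreteSubgroup Γ) (x : X) (R : ℝ) :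
    (orbitBall Γ x R).ncard ≤
      ⌊P₀⌋₊ ^ (⌈R / r₀⌉₊ + 1) * (orbitBall Γ x (2 * r₀)).ncard := by
  have hball : orbitBall Γ x R ⊆ closedBall x R := by
    rintro _ ⟨g, -, rfl, hd⟩
    exact mem_closedBall'.2 hd
  have hcard (S : Finset X) (hS : ↑S ⊆ orbitBall Γ x R) :=
    hX.card_le_pow_ceil hσ hr₀ x R (hS.trans hball)
  obtain ⟨N, hN, hNsep, hNet⟩ := exists_net_of_card_le (by positivity) hcard
  have hcover : orbitBall Γ x R ⊆ ⋃ p ∈ N, orbitBall Γ x R ∩ closedBall p (2 * r₀) := by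
    intro y hy
    obtain ⟨p, hp, hyp⟩ := hNet y hy
    exact Set.mem_biUnion hp ⟨hy, hyp⟩
  have hfinite : (⋃ p ∈ N, orbitBall Γ x R ∩ closedBall p (2 * r₀)).Finite :=
    N.finite_toSet.biUnion fun p _ => (orbitBall_finite hΓ x R).inter_of_left _
  calc (orbitBall Γ x R).ncard
      ≤ ∑ p ∈ N, (orbitBall Γ x R ∩ closedBall p (2 * r₀)).ncard :=
        (Set.ncard_le_ncard hcover hfinite).trans (N.set_ncard_biUnion_le _)
    _ ≤ N.card * (orbitBall Γ x (2 * r₀)).ncard := by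
        refine Finset.sum_le_card_nsmul _ _ _ fun p hp => ?_
        obtain ⟨h, hh, rfl, -⟩ := hN hp
        exact ncard_orbitBall_inter_closedBall_le hΓ hh x R (2 * r₀)
    _ ≤ _ := Nat.mul_le_mul_right _ (hcard N hN hNsep)

theorem IsPacked.isBoundedUnder_log_orbitBall_div (hX : IsPacked X P₀ r₀) (hσ : IsGCB σ)
    (hr₀ : 0 < r₀) (hΓ : IsDiscreteSubgroup Γ) (x : X) :
    IsBoundedUnder (· ≤ ·) atTop fun R : ℝ => Real.log (orbitBall Γ x R).ncard / R := by
  set K := (orbitBall Γ x (2 * r₀)).ncard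
  refine ⟨Real.log ⌊P₀⌋₊ / r₀ + 1, eventually_map.2 ?_⟩
  filter_upwards [eventually_gt_atTop 0,
    eventually_ge_atTop (2 * Real.log ⌊P₀⌋₊ + Real.log K)] with R hR hlarge
  have hcount := hX.ncard_orbitBall_le hσ hr₀ hΓ x R
  have hpos := orbitBall_ncard_pos hΓ x hR.le
  obtain ⟨hP, hK⟩ := mul_ne_zero_iff.1 (hpos.trans_le hcount).ne'
  have hceil : (⌈R / r₀⌉₊ : ℝ) + 1 ≤ R / r₀ + 2 := by
    linarith [Nat.ceil_lt_add_one (div_nonneg hR.le hr₀.le)]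
  rw [div_le_iff₀ hR]
  calc Real.log (orbitBall Γ x R).ncard
      ≤ Real.log (⌊P₀⌋₊ ^ (⌈R / r₀⌉₊ + 1) * K) :=
        Real.log_le_log (mod_cast hpos) (mod_cast hcount)
    _ = (⌈R / r₀⌉₊ + 1) * Real.log ⌊P₀⌋₊ + Real.log K := by
        rw [Real.log_mul (mod_cast hP) (mod_cast hK), Real.log_pow, Nat.cast_succ]
    _ ≤ (R / r₀ + 2) * Real.log ⌊P₀⌋₊ + Real.log K := by gcongr
    _ = Real.log ⌊P₀⌋₊ / r₀ * R + (2 * Real.log ⌊P₀⌋₊ + Real.log K) := by ring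
    _ ≤ (Real.log ⌊P₀⌋₊ / r₀ + 1) * R := by linarith

theorem ncard_le_ncard_mul_ncard_orbitBall (hΓ : IsDiscreteSubgroup Γ) (x : X) (R : ℝ) :
    {g | g ∈ Γ ∧ dist x (g x) ≤ R}.ncard ≤
      {g | g ∈ Γ ∧ dist x (g x) ≤ 0}.ncard * (orbitBall Γ x R).ncard := by
  classical
  rw [Set.ncard_eq_toFinset_card _ (hΓ x R),
    Set.ncard_eq_toFinset_card _ (orbitBall_finite hΓ x R)]
  refine Finset.card_le_mul_card_image_of_maps_to (f := fun g : X ≃ᵢ X => g x) (fun g hg => ?_) _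
    fun y hy => ?_
  · obtain ⟨hgΓ, hg⟩ := (Set.Finite.mem_toFinset _).1 hg
    exact (Set.Finite.mem_toFinset _).2 ⟨g, hgΓ, rfl, hg⟩
  · obtain ⟨h, hh, rfl, -⟩ := (Set.Finite.mem_toFinset _).1 hy
    rw [← Set.ncard_coe_finset, ← Set.ncard_image_of_injective _ (mul_right_injective h⁻¹)]
    refine Set.ncard_le_ncard ?_ (hΓ x 0)
    rintro _ ⟨g, hg, rfl⟩
    obtain ⟨hg, hgx⟩ := Finset.mem_filter.1 hg
    refine ⟨Γ.mul_mem (Γ.inv_mem hh) ((Set.Finite.mem_toFinset _).1 hg).1, ?_⟩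
    rw [IsometryEquiv.mul_apply, hgx, h.inv_apply_self, dist_self]

theorem log_div_le_limsup_of_pow_le {f : ℝ → ℕ} {b M : ℕ} {D a : ℝ} (hb : 0 < b) (hD : 0 < D)
    (hf : ∀ n : ℕ, b ^ n ≤ M * f (n * D + a))
    (hbdd : IsBoundedUnder (· ≤ ·) atTop fun R => Real.log (f R) / R) :
    Real.log b / D ≤ limsup (fun R => Real.log (f R) / R) atTop := by
  refine le_of_forall_lt_imp_le_of_dense fun c hc => le_limsup_of_frequently_le ?_ hbdd
  have hgap : 0 < Real.log b - c * D := sub_pos.2 ((lt_div_iff₀ hD).1 hc)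
  have hradius : Tendsto (fun n : ℕ => n * D + a) atTop atTop :=
    tendsto_atTop_add_const_right _ _ (tendsto_natCast_atTop_atTop.atTop_mul_const hD)
  have hgrowth : Tendsto (fun n : ℕ => n * (Real.log b - c * D)) atTop atTop :=
    tendsto_natCast_atTop_atTop.atTop_mul_const hgap
  refine hradius.frequently (Eventually.frequently ?_)
  filter_upwards [hgrowth.eventually_ge_atTop (c * a + Real.log M),
    hradius.eventually_gt_atTop 0] with n hn hpos
  have hpow : 0 < b ^ n := pow_pos hb n
  obtain ⟨hM, hfn⟩ := mul_ne_zero_iff.1 (hpow.trans_le (hf n)).ne'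
  have hlog : Real.log (b ^ n) ≤ Real.log (M * f (n * D + a)) :=
    Real.log_le_log (mod_cast hpow) (mod_cast hf n)
  rw [Real.log_pow, Real.log_mul (mod_cast hM) (mod_cast hfn)] at hlog
  rw [le_div_iff₀ hpos]
  linarith

theorem dist_apply_le_of_mem_pow {S : Set (X ≃ᵢ X)} {x : X} {R : ℝ}
    (hS : ∀ g ∈ S, dist x (g x) ≤ R) {n : ℕ} {w : X ≃ᵢ X} (hw : w ∈ S ^ n) :
    dist x (w x) ≤ n * R := by
  induction n generalizing w with
  | zero =>
    rw [pow_zero, Set.mem_one] at hw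
    simp [hw]
  | succ n ih =>
    obtain ⟨g, hg, w', hw', rfl⟩ := Set.mem_mul.1 (pow_succ' S n ▸ hw)
    push_cast
    linarith [dist_mul_apply_le g w' x, hS g hg, ih hw']

theorem mapsTo_of_mem_pow {S : Set (X ≃ᵢ X)} {Y : Set X} (hS : ∀ g ∈ S, Set.MapsTo g Y Y) {n : ℕ}
    {w : X ≃ᵢ X} (hw : w ∈ S ^ n) : Set.MapsTo w Y Y := by
  induction n generalizing w with
  | zero =>
    rw [pow_zero, Set.mem_one] at hw
    exact hw ▸ Set.mapsTo_id Y
  | succ n ih =>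
    obtain ⟨g, hg, w', hw', rfl⟩ := Set.mem_mul.1 (pow_succ' S n ▸ hw)
    exact (hS g hg).comp (ih hw')

theorem IsPingPongPair.ncard_pow {u v : X ≃ᵢ X} (h : IsPingPongPair u v) (n : ℕ) :
    (({u, v} : Set (X ≃ᵢ X)) ^ n).ncard = 2 ^ n := by
  obtain ⟨Y, ⟨z, hz⟩, hu, hv, hdisj⟩ := h
  induction n with
  | zero => rw [pow_zero, pow_zero, ← Set.singleton_one, Set.ncard_singleton]
  | succ n ih =>
    have hfin := finite_pow_of_finite (Set.toFinite {u, v}) n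
    have hmaps {w : X ≃ᵢ X} (hw : w ∈ ({u, v} : Set (X ≃ᵢ X)) ^ n) : w z ∈ Y :=
      mapsTo_of_mem_pow (by rintro g (rfl | rfl) <;> assumption) hw hz
    rw [pow_succ', Set.insert_eq, Set.union_mul, Set.singleton_mul, Set.singleton_mul,
      ← Set.insert_eq, Set.ncard_union_eq ?_ (hfin.image _) (hfin.image _),
      Set.ncard_image_of_injective _ (mul_right_injective u),
      Set.ncard_image_of_injective _ (mul_right_injective v), ih, pow_succ, mul_two]
    refine Set.disjoint_left.2 ?_
    rintro _ ⟨w, hw, rfl⟩ ⟨w', hw', heq⟩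
    refine Set.disjoint_left.1 hdisj ⟨w z, hmaps hw, rfl⟩ ⟨w' z, hmaps hw', ?_⟩
    exact DFunLike.congr_fun heq z

theorem IsPingPongPair.log_two_div_le_orbitEntropy {u v : X ≃ᵢ X} (h : IsPingPongPair u v)
    (hX : IsPacked X P₀ r₀) (hσ : IsGCB σ) (hr₀ : 0 < r₀) (hΓ : IsDiscreteSubgroup Γ)
    (hu : u ∈ Γ) (hv : v ∈ Γ) {x₀ : X} {D : ℝ} (hD : 0 < D) (hdu : dist x₀ (u x₀) ≤ D)
    (hdv : dist x₀ (v x₀) ≤ D) (x : X) : Real.log 2 / D ≤ orbitEntropy Γ x := by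
  have hwords (n : ℕ) : ({u, v} : Set (X ≃ᵢ X)) ^ n ⊆
      {g | g ∈ Γ ∧ dist x (g x) ≤ n * D + 2 * dist x x₀} := by
    refine fun w hw => ⟨Subgroup.pow_subset (by rintro g (rfl | rfl) <;> assumption) hw, ?_⟩
    refine (dist_apply_le_of_mem_closedBall (y := x₀) (mem_closedBall.2 le_rfl) w).trans ?_
    gcongr
    exact dist_apply_le_of_mem_pow (by rintro g (rfl | rfl) <;> assumption) hw
  have hcount (n : ℕ) : 2 ^ n ≤ {g | g ∈ Γ ∧ dist x (g x) ≤ 0}.ncard *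
      (orbitBall Γ x (n * D + 2 * dist x x₀)).ncard := by
    rw [← h.ncard_pow n]
    exact (Set.ncard_le_ncard (hwords n) (hΓ x _)).trans (ncard_le_ncard_mul_ncard_orbitBall hΓ x _)
  exact log_div_le_limsup_of_pow_le two_pos hD hcount
    (hX.isBoundedUnder_log_orbitBall_div hσ hr₀ hΓ x)

end OrbitGrowth

section Nilradius

open scoped Pointwise

theorem IsDeltaHyperbolic.mono {X : Type*} [MetricSpace X] {δ δ' : ℝ}
    (hX : IsDeltaHyperbolic X δ) (h : δ ≤ δ') : IsDeltaHyperbolic X δ' := fun x y z w =>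
  (hX x y z w).trans (by gcongr)

theorem exists_forall_le_orbitEntropy_mul (P₀ δ : ℝ) {r₀ : ℝ} (hr₀ : 0 < r₀) :
    ∃ C₀ : ℝ, 0 < C₀ ∧ ∀ (X : Type*) [MetricSpace X] (σ : X → X → ℝ → X), IsGCB σ →
      IsDeltaHyperbolic X δ → IsPacked X P₀ r₀ → ∀ Γ : Subgroup (X ≃ᵢ X),
      (∀ g ∈ Γ, IsSigmaIsometry σ g) → IsDiscreteSubgroup Γ → ∀ (x₀ : X) (R : ℝ), 0 < R →
      ¬ IsVirtuallyNilpotent (almostStabilizer Γ R x₀) → ∀ x, C₀ ≤ orbitEntropy Γ x * R := by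
  obtain ⟨N, hN, htits⟩ := exists_isVirtuallyNilpotent_or_isPingPongPair (IsPacked.netCount P₀ r₀)
    (lt_max_of_lt_right one_pos : 0 < max δ 1)
  have hN : (0 : ℝ) < N := mod_cast hN
  refine ⟨Real.log 2 / N, div_pos (Real.log_pos one_lt_two) hN, ?_⟩
  intro X _ σ hσ hX hpacked Γ hΓσ hΓ x₀ R hR hnil x
  have : Nonempty X := ⟨x₀⟩
  have hsub : {g | g ∈ Γ ∧ dist x₀ (g x₀) ≤ R} ⊆ Γ := fun g hg => hg.1
  obtain ⟨u, hu, v, hv, huv⟩ := (htits X σ hσ (hX.mono (le_max_left _ _))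
    (hpacked.hasNetBound hσ hr₀) Γ hΓσ hΓ _ hsub (hΓ x₀ R)
    ⟨Γ.one_mem, (dist_self x₀).trans_le hR.le⟩
    fun g hg => ⟨Γ.inv_mem hg.1, (dist_inv_apply g x₀).trans_le hg.2⟩).resolve_left hnil
  have hentropy := huv.log_two_div_le_orbitEntropy hpacked hσ hr₀ hΓ (Subgroup.pow_subset hsub hu)
    (Subgroup.pow_subset hsub hv) (mul_pos hN hR) (dist_apply_le_of_mem_pow (fun g hg => hg.2) hu)
    (dist_apply_le_of_mem_pow (fun g hg => hg.2) hv) x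
  rwa [← div_div, div_le_iff₀ hR] at hentropy

namespace IsNonElementary

variable {X : Type*} [MetricSpace X] {Γ : Subgroup (X ≃ᵢ X)}

theorem nonempty (hΓ : IsNonElementary Γ) : Nonempty X := by
  by_contra hX
  rw [not_nonempty_iff] at hX
  obtain ⟨a, b, -, -, hab⟩ := hΓ
  have : Subsingleton (X ≃ᵢ X) := ⟨fun f g => IsometryEquiv.ext fun x => isEmptyElim x⟩
  exact hab ⟨⊤, inferInstance, inferInstance⟩

theorem exists_forall_not_isVirtuallyNilpotent (hΓ : IsNonElementary Γ) (x : X) :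
    ∃ R₀, ∀ R, R₀ ≤ R → ¬ IsVirtuallyNilpotent (almostStabilizer Γ R x) := by
  obtain ⟨a, b, ha, hb, hab⟩ := hΓ
  refine ⟨max (dist x (a x)) (dist x (b x)), fun R hR hnil => hab (hnil.of_le ?_)⟩
  refine (Subgroup.closure_le _).2 ?_
  rintro g (rfl | rfl)
  · exact Subgroup.subset_closure ⟨ha, (le_max_left _ _).trans hR⟩
  · exact Subgroup.subset_closure ⟨hb, (le_max_right _ _).trans hR⟩

theorem bddAbove (hΓ : IsNonElementary Γ) (x : X) :
    BddAbove {r : ℝ | 0 ≤ r ∧ IsVirtuallyNilpotent (almostStabilizer Γ r x)} := by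
  obtain ⟨R₀, hR₀⟩ := hΓ.exists_forall_not_isVirtuallyNilpotent x
  exact ⟨R₀, fun r hr => le_of_not_ge fun h => hR₀ r h hr.2⟩

theorem div_le_nilrad (hΓ : IsNonElementary Γ) {x : X} {C L : ℝ} (hL : 0 < L)
    (h : ∀ R, 0 < R → ¬ IsVirtuallyNilpotent (almostStabilizer Γ R x) → C ≤ L * R) :
    C / L ≤ nilrad Γ x := by
  refine le_of_forall_gt_imp_ge_of_dense fun R hR => (div_le_iff₀' hL).2 ?_
  have hR₀ : 0 < R := (Real.sSup_nonneg fun _ hr => hr.1).trans_lt hR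
  exact h R hR₀ fun hnil => hR.not_ge (le_csSup (hΓ.bddAbove x) ⟨hR₀.le, hnil⟩)

end IsNonElementary

theorem entropy_lower_bound_via_nilradius_general (P₀ δ : ℝ) {r₀ : ℝ} (hr₀ : 0 < r₀) :
    ∃ C₀ : ℝ, 0 < C₀ ∧
      ∀ (X : Type*) [MetricSpace X] (σ : X → X → ℝ → X),
        IsGCB σ → IsDeltaHyperbolic X δ → IsPacked X P₀ r₀ →
        ∀ Γ : Subgroup (X ≃ᵢ X), (∀ g ∈ Γ, IsSigmaIsometry σ g) →
          IsDiscreteSubgroup Γ → IsNonElementary Γ →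
          (∀ x : X, BddAbove {r : ℝ | 0 ≤ r ∧ IsVirtuallyNilpotent (almostStabilizer Γ r x)}) ∧
          0 < sInf (Set.range fun x : X => nilrad Γ x) ∧
          ∀ x : X, C₀ / sInf (Set.range fun x : X => nilrad Γ x) ≤ orbitEntropy Γ x := by
  obtain ⟨C₀, hC₀, hC₀_le⟩ := exists_forall_le_orbitEntropy_mul P₀ δ hr₀
  refine ⟨C₀, hC₀, fun X _ σ hσ hX hpacked Γ hΓσ hΓ hne => ?_⟩
  have hentropy := hC₀_le X σ hσ hX hpacked Γ hΓσ hΓ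
  have : Nonempty X := hne.nonempty
  have hpos (x : X) : 0 < orbitEntropy Γ x := by
    obtain ⟨R₀, hR₀⟩ := hne.exists_forall_not_isVirtuallyNilpotent x
    have hR : 0 < max R₀ 1 := lt_max_of_lt_right one_pos
    have hle := hentropy x (max R₀ 1) hR (hR₀ _ (le_max_left _ _)) x
    exact pos_of_mul_pos_left (hC₀.trans_le hle) hR.le
  have hnilrad (x : X) : C₀ / orbitEntropy Γ x ≤ sInf (Set.range fun x : X => nilrad Γ x) := by
    refine le_csInf (Set.range_nonempty _) ?_
    rintro _ ⟨x₀, rfl⟩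
    exact hne.div_le_nilrad (hpos x) fun R hR hnil => hentropy x₀ R hR hnil x
  have hnilrad_pos : 0 < sInf (Set.range fun x : X => nilrad Γ x) :=
    (div_pos hC₀ (hpos (Classical.arbitrary X))).trans_le (hnilrad _)
  exact ⟨hne.bddAbove, hnilrad_pos, fun x => (div_le_comm₀ (hpos x) hnilrad_pos).1 (hnilrad x)⟩

end Nilradius

/-- **Corollary 1.2(ii)**: the nilradius of a non-elementary discrete action is finite and
positive, and the entropy of the action is bounded below by `C₀ · nilrad(Γ,X)⁻¹`. -/
theorem entropy_lower_bound_via_nilradius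
    (P₀ r₀ δ : ℝ) (hP₀ : 0 < P₀) (hr₀ : 0 < r₀) (hδ : 0 < δ) :
    ∃ C₀ : ℝ, 0 < C₀ ∧
      ∀ (X : Type*) [MetricSpace X] [CompleteSpace X] (σ : X → X → ℝ → X),
        IsGCB σ → IsDeltaHyperbolic X δ → IsPacked X P₀ r₀ →
        ∀ Γ : Subgroup (X ≃ᵢ X), (∀ g ∈ Γ, IsSigmaIsometry σ g) →
          IsDiscreteSubgroup Γ → IsNonElementary Γ →
          (∀ x : X,
            BddAbove {r : ℝ | 0 ≤ r ∧ IsVirtuallyNilpotent ↥(almostStabilizer Γ r x)}) ∧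
          0 < sInf (Set.range fun x : X => nilrad Γ x) ∧
          ∀ x : X,
            C₀ / sInf (Set.range fun x : X => nilrad Γ x) ≤
              Filter.limsup (fun R : ℝ =>
                Real.log ((Set.ncard {y : X | ∃ g ∈ Γ, y = g x ∧ dist x y ≤ R} : ℕ) : ℝ) / R)
                Filter.atTop := by
  obtain ⟨C₀, hC₀, h⟩ := entropy_lower_bound_via_nilradius_general P₀ δ hr₀
  exact ⟨C₀, hC₀, fun X _ _ => h X⟩
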